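/- arXiv:1609.02068 — 5 statements merged into one kernel-verified Lean document; each statement's English description precedes it below -/
import Mathlib

section
/- Let n ≥ 3 be an integer. There is a constant C, depending only on n, with the following property: for every complex Hilbert space H, every bounded self-adjoint operator A on H, every orthogonal projection P on H, every bounded operator J on H with [P, J] = 0, and every compactly supported f ∈ Cⁿ(ℝ), one has ‖J 𝒟(A,P;f)‖ + ‖𝒟(A,P;f) J‖ ≤ C · N_n(f) · (‖J P A (I−P)‖ + ‖[A, J]‖), where all norms are operator norms. -/
open scoped BigOperators

/-- `N_n(f) = ∫ F(x) ⟨x⟩^{n−2} dx` with `F(x) = Σ_{l=0}^n |f^{(l)}(x)| ⟨x⟩^{−n+l}`,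
`⟨x⟩ = √(1+x²)`. -/
noncomputable def Nseminorm (n : ℕ) (f : ℝ → ℝ) : ℝ :=
  ∫ x : ℝ,
    (∑ l ∈ Finset.range (n + 1),
      |iteratedDeriv l f x| * Real.sqrt (1 + x ^ 2) ^ ((l : ℤ) - (n : ℤ))) *
    Real.sqrt (1 + x ^ 2) ^ ((n : ℤ) - 2)

/-- `𝒟(A, P; f) = P f(PAP) P − P f(A) P`, with `f(·)` the continuous functional calculus. -/
noncomputable def Dop {H : Type*} [NormedAddCommGroup H] [InnerProductSpace ℂ H]
    [CompleteSpace H] (A P : H →L[ℂ] H) (f : ℝ → ℝ) : H →L[ℂ] H :=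
  P * cfc f (P * A * P) * P - P * cfc f A * P

/-! If `a` and `b` are self-adjoint, then `x e^{isa} - e^{isb} x` has norm at most
`|s| ‖x a - b x‖`, by differentiating `e^{-isb} x e^{isa}`. Writing `f(a)` and `f(b)` as Fourier
integrals of unitary groups gives `‖x f(a) - f(b) x‖ ≤ ‖𝓕 (f')‖₁ ‖x a - b x‖`. For `b = p a p` and
`x = j p`, the difference `x a - b x` is `j p a (1 - p) + p [j, a] p`, and both `j 𝒟` and `𝒟 j`
differ from `(f(b) x - x f(a)) p` only by compressed commutators of `j` with `f(b)` or `f(a)`.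

Since `N_n(f)` controls only weighted `L¹` norms, `‖𝓕 (f')‖₁` cannot be bounded through Plancherel.
Instead, for each frequency `s` the function `f'` is split at `⟨x⟩ ∼ 1 / |s|`: the inner part is
estimated by its `L¹` norm and the outer part after two integrations by parts. By Fubini and
`∫ ⟨x⟩ / (1 + s²⟨x⟩²) ds = π`, the resulting bounds are integrable in `s`. -/

open MeasureTheory
open scoped FourierTransform Real

section PhaseCutoff

/-- A smooth cutoff to the phase-space region `|s| ⟨x⟩ ≲ 1`, where `⟨x⟩² = 1 + x²`. -/
noncomputable def phaseCutoff (s x : ℝ) : ℝ := (1 + s ^ 2 * (1 + x ^ 2))⁻¹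

/-- The complement of `phaseCutoff`, divided by `s²` so that `s = 0` needs no exception. -/
noncomputable def phaseTail (s x : ℝ) : ℝ := (1 + x ^ 2) * phaseCutoff s x

variable (s x : ℝ)

lemma phaseCutoff_pos : 0 < phaseCutoff s x := by unfold phaseCutoff; positivity

lemma phaseCutoff_le_one : phaseCutoff s x ≤ 1 :=
  inv_le_one_of_one_le₀ <| le_add_of_nonneg_right (by positivity)

lemma phaseCutoff_add_sq_mul_phaseTail : phaseCutoff s x + s ^ 2 * phaseTail s x = 1 := by
  unfold phaseTail phaseCutoff
  field_simp

lemma continuous_uncurry_phaseCutoff : Continuous (Function.uncurry phaseCutoff) := by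
  unfold phaseCutoff Function.uncurry
  exact Continuous.inv₀ (by fun_prop) fun p => by positivity

@[fun_prop]
lemma continuous_phaseCutoff : Continuous (phaseCutoff s) :=
  continuous_uncurry_phaseCutoff.comp (by fun_prop : Continuous fun x => (s, x))

lemma contDiff_phaseTail {n : WithTop ℕ∞} : ContDiff ℝ n (phaseTail s) := by
  unfold phaseTail phaseCutoff
  exact ContDiff.mul (by fun_prop) (ContDiff.inv (by fun_prop) fun x => by positivity)

lemma hasDerivAt_phaseCutoff :
    HasDerivAt (phaseCutoff s) (-(2 * s ^ 2 * x * phaseCutoff s x ^ 2)) x := by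
  have hden : HasDerivAt (fun x : ℝ => 1 + s ^ 2 * (1 + x ^ 2)) (s ^ 2 * (2 * x)) x := by
    simpa using (((hasDerivAt_pow 2 x).const_add 1).const_mul (s ^ 2)).const_add 1
  refine (hden.inv (by positivity)).congr_deriv ?_
  unfold phaseCutoff
  field_simp

lemma deriv_phaseTail : deriv (phaseTail s) = fun x => 2 * x * phaseCutoff s x ^ 2 := by
  ext x
  have h := ((hasDerivAt_pow 2 x).const_add 1).mul (hasDerivAt_phaseCutoff s x)
  refine (h.congr_deriv ?_).deriv
  have hsum := phaseCutoff_add_sq_mul_phaseTail s x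
  rw [phaseTail] at hsum
  simp only [Nat.cast_ofNat, Nat.add_one_sub_one, pow_one]
  linear_combination (-2 * x * phaseCutoff s x) * hsum

lemma iteratedDeriv_two_phaseTail :
    iteratedDeriv 2 (phaseTail s) x =
      phaseCutoff s x ^ 2 * (2 - 8 * (s ^ 2 * x ^ 2 * phaseCutoff s x)) := by
  rw [iteratedDeriv_succ, iteratedDeriv_one, deriv_phaseTail]
  have h := ((hasDerivAt_id x).const_mul 2).mul ((hasDerivAt_phaseCutoff s x).pow 2)
  refine (h.congr_deriv ?_).deriv
  simp only [id, Nat.cast_ofNat, Nat.add_one_sub_one, pow_one, Pi.pow_apply]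
  ring

lemma abs_deriv_phaseTail_le :
    |deriv (phaseTail s) x| ≤ 2 * √(1 + x ^ 2) * phaseCutoff s x := by
  have hκ := phaseCutoff_pos s x
  have hx : |x| ≤ √(1 + x ^ 2) := Real.abs_le_sqrt (by linarith)
  calc |deriv (phaseTail s) x| = 2 * |x| * phaseCutoff s x ^ 2 := by
        simp only [deriv_phaseTail, abs_mul, abs_pow, abs_two, abs_of_pos hκ]
    _ ≤ 2 * √(1 + x ^ 2) * phaseCutoff s x := by
        gcongr
        exact pow_le_of_le_one hκ.le (phaseCutoff_le_one s x) two_ne_zero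

lemma abs_iteratedDeriv_two_phaseTail_le :
    |iteratedDeriv 2 (phaseTail s) x| ≤ 6 * phaseCutoff s x := by
  have hκ := phaseCutoff_pos s x
  have hfactor : |2 - 8 * (s ^ 2 * x ^ 2 * phaseCutoff s x)| ≤ 6 := by
    have hnonneg : 0 ≤ s ^ 2 * x ^ 2 * phaseCutoff s x := by positivity
    have hle : s ^ 2 * x ^ 2 * phaseCutoff s x ≤ 1 := by
      rw [phaseCutoff, ← div_eq_mul_inv, div_le_one (by positivity)]
      nlinarith [sq_nonneg s]
    rw [abs_le]
    constructor <;> linarith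
  rw [iteratedDeriv_two_phaseTail, abs_mul, abs_of_pos (by positivity), mul_comm 6]
  gcongr
  exact pow_le_of_le_one hκ.le (phaseCutoff_le_one s x) two_ne_zero

lemma sqrt_mul_phaseCutoff_eq (t : ℝ) :
    √(1 + x ^ 2) * phaseCutoff (2 * π * t) x =
      √(1 + x ^ 2) * (1 + (t * (2 * π * √(1 + x ^ 2))) ^ 2)⁻¹ := by
  rw [phaseCutoff, mul_pow t, mul_pow _ √_, Real.sq_sqrt (by positivity)]
  ring_nf

lemma integrable_sqrt_mul_phaseCutoff :
    Integrable fun t : ℝ => √(1 + x ^ 2) * phaseCutoff (2 * π * t) x := by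
  simp only [sqrt_mul_phaseCutoff_eq]
  exact (integrable_inv_one_add_sq.comp_mul_right' (by positivity)).const_mul _

lemma integral_sqrt_mul_phaseCutoff :
    ∫ t : ℝ, √(1 + x ^ 2) * phaseCutoff (2 * π * t) x = 1 / 2 := by
  simp only [sqrt_mul_phaseCutoff_eq]
  rw [integral_const_mul, Measure.integral_comp_mul_right (fun u : ℝ => (1 + u ^ 2)⁻¹),
    integral_univ_inv_one_add_sq, abs_of_pos (by positivity), smul_eq_mul]
  have : 0 < √(1 + x ^ 2) := by positivity
  field_simp

variable {Φ : ℝ → ℝ}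

lemma integrable_prod_mul_phaseCutoff (hΦ : Integrable Φ) :
    Integrable (Function.uncurry fun x t : ℝ =>
      Φ x * (√(1 + x ^ 2) * phaseCutoff (2 * π * t) x)) (volume.prod volume) := by
  have hmeas : AEStronglyMeasurable (Function.uncurry fun x t : ℝ =>
      Φ x * (√(1 + x ^ 2) * phaseCutoff (2 * π * t) x)) (volume.prod volume) := by
    refine hΦ.aestronglyMeasurable.comp_fst.mul (Continuous.aestronglyMeasurable ?_)
    exact Continuous.mul (by fun_prop) (continuous_uncurry_phaseCutoff.comp
      (by fun_prop : Continuous fun p : ℝ × ℝ => (2 * π * p.2, p.1)))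
  refine (integrable_prod_iff hmeas).2
    ⟨.of_forall fun x => (integrable_sqrt_mul_phaseCutoff x).const_mul (Φ x),
      (hΦ.norm.mul_const (1 / 2)).congr (.of_forall fun x => ?_)⟩
  have hnonneg (t : ℝ) :=
    mul_nonneg (Real.sqrt_nonneg (1 + x ^ 2)) (phaseCutoff_pos (2 * π * t) x).le
  simp only [Function.uncurry_apply_pair, norm_mul _ (_ * _), Real.norm_of_nonneg (hnonneg _),
    integral_const_mul ‖Φ x‖, integral_sqrt_mul_phaseCutoff]

lemma integral_integral_mul_phaseCutoff (hΦ : Integrable Φ) :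
    ∫ t : ℝ, ∫ x : ℝ, Φ x * (√(1 + x ^ 2) * phaseCutoff (2 * π * t) x) =
      1 / 2 * ∫ x, Φ x := by
  rw [← integral_integral_swap (integrable_prod_mul_phaseCutoff hΦ)]
  simp only [integral_const_mul (Φ _), integral_sqrt_mul_phaseCutoff]
  rw [integral_mul_const, mul_comm]

end PhaseCutoff

section WeightedSobolev

variable {E : Type*} [NormedAddCommGroup E] [NormedSpace ℝ E]

lemma tsupport_iteratedDeriv_subset (f : ℝ → E) (l : ℕ) :
    tsupport (iteratedDeriv l f) ⊆ tsupport f := by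
  induction l with
  | zero => rw [iteratedDeriv_zero]
  | succ l ih => rw [iteratedDeriv_succ]; exact tsupport_deriv_subset.trans ih

lemma hasCompactSupport_iteratedDeriv {f : ℝ → E} (hs : HasCompactSupport f) (l : ℕ) :
    HasCompactSupport (iteratedDeriv l f) :=
  hs.of_isClosed_subset isClosed_closure (tsupport_iteratedDeriv_subset f l)

lemma integrable_iteratedDeriv {f : ℝ → E} {n : WithTop ℕ∞} {l : ℕ} (hf : ContDiff ℝ n f)
    (hs : HasCompactSupport f) (hl : l ≤ n) : Integrable (iteratedDeriv l f) :=
  (hf.continuous_iteratedDeriv l hl).integrable_of_hasCompactSupport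
    (hasCompactSupport_iteratedDeriv hs l)

/-- The density of the `L¹` Sobolev norm of order `n` whose `l`-th derivative carries the weight
`⟨x⟩^{l-m}`. The seminorm `N_n` has `m = 2`, and `m = 1` is what the Fourier transform of `f'`
requires. -/
noncomputable def weightedSobolevDensity (m : ℤ) (n : ℕ) (g : ℝ → E) (x : ℝ) : ℝ :=
  ∑ l ∈ Finset.range (n + 1), √(1 + x ^ 2) ^ (l - m) * ‖iteratedDeriv l g x‖

variable {g : ℝ → E}

lemma continuous_weightedSobolevDensity (m : ℤ) {n : ℕ} (hg : ContDiff ℝ n g) :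
    Continuous (weightedSobolevDensity m n g) := by
  refine continuous_finsetSum _ fun l hl => ?_
  have hln : (l : WithTop ℕ∞) ≤ n := mod_cast Nat.lt_succ_iff.1 (Finset.mem_range.1 hl)
  have hweight : Continuous fun x : ℝ => √(1 + x ^ 2) ^ (l - m) :=
    Continuous.zpow₀ (by fun_prop) _ fun x => .inl (by positivity)
  exact hweight.mul (hg.continuous_iteratedDeriv l hln).norm

lemma hasCompactSupport_weightedSobolevDensity (m : ℤ) (n : ℕ) (hs : HasCompactSupport g) :
    HasCompactSupport (weightedSobolevDensity m n g) :=
  hs.mono' <| Function.support_subset_iff'.2 fun x hx => Finset.sum_eq_zero fun l _ => by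
    rw [image_eq_zero_of_notMem_tsupport fun h => hx (tsupport_iteratedDeriv_subset g l h),
      norm_zero, mul_zero]

lemma integrable_weightedSobolevDensity (m : ℤ) {n : ℕ} (hg : ContDiff ℝ n g)
    (hs : HasCompactSupport g) : Integrable (weightedSobolevDensity m n g) :=
  (continuous_weightedSobolevDensity m hg).integrable_of_hasCompactSupport
    (hasCompactSupport_weightedSobolevDensity m n hs)

lemma weightedSobolevDensity_mono (m : ℤ) {n k : ℕ} (hnk : n ≤ k) (x : ℝ) :
    weightedSobolevDensity m n g x ≤ weightedSobolevDensity m k g x :=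
  Finset.sum_le_sum_of_subset_of_nonneg (Finset.range_mono (by gcongr)) fun _ _ _ => by positivity

lemma weightedSobolevDensity_deriv_le (m : ℤ) (n : ℕ) (x : ℝ) :
    weightedSobolevDensity m n (deriv g) x ≤ weightedSobolevDensity (m + 1) (n + 1) g x := by
  rw [weightedSobolevDensity, weightedSobolevDensity, Finset.sum_range_succ' _ (n + 1)]
  simp only [iteratedDeriv_succ', Nat.cast_add_one, add_sub_add_right_eq_sub]
  exact le_add_of_nonneg_right (by positivity)

lemma weightedSobolevDensity_linearIsometry_comp {G : Type*} [NormedAddCommGroup G]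
    [NormedSpace ℝ G] (m : ℤ) {n : ℕ} (hg : ContDiff ℝ n g) (T : E →ₗᵢ[ℝ] G) (x : ℝ) :
    weightedSobolevDensity m n (T ∘ g) x = weightedSobolevDensity m n g x := by
  refine Finset.sum_congr rfl fun l hl => ?_
  have hln : (l : WithTop ℕ∞) ≤ n := mod_cast Nat.lt_succ_iff.1 (Finset.mem_range.1 hl)
  rw [← norm_iteratedFDeriv_eq_norm_iteratedDeriv, ← norm_iteratedFDeriv_eq_norm_iteratedDeriv,
    T.norm_iteratedFDeriv_comp_left hg.contDiffAt hln]

lemma iteratedDeriv_two_smul {φ : ℝ → ℝ} (hφ : ContDiff ℝ 2 φ) (hg : ContDiff ℝ 2 g) (x : ℝ) :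
    iteratedDeriv 2 (φ • g) x =
      φ x • iteratedDeriv 2 g x + (2 * deriv φ x) • deriv g x + iteratedDeriv 2 φ x • g x := by
  have h := iteratedDerivWithin_smul (n := 2) (Set.mem_univ x) uniqueDiffOn_univ
    hφ.contDiffAt.contDiffWithinAt hg.contDiffAt.contDiffWithinAt
  simpa [Finset.sum_range_succ, iteratedDeriv_one, mul_smul, ofNat_smul_eq_nsmul] using h

lemma norm_iteratedDeriv_two_phaseTail_smul_le (hg : ContDiff ℝ 2 g) (s x : ℝ) :
    ‖iteratedDeriv 2 (phaseTail s • g) x‖ ≤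
      phaseCutoff s x * (√(1 + x ^ 2) ^ 2 * ‖iteratedDeriv 2 g x‖ +
        4 * √(1 + x ^ 2) * ‖deriv g x‖ + 6 * ‖g x‖) := by
  have htail : |phaseTail s x| = √(1 + x ^ 2) ^ 2 * phaseCutoff s x := by
    have := phaseCutoff_pos s x
    rw [phaseTail, Real.sq_sqrt (by positivity), abs_of_pos (by positivity)]
  have htail' := abs_deriv_phaseTail_le s x
  have htail'' := abs_iteratedDeriv_two_phaseTail_le s x
  rw [iteratedDeriv_two_smul (contDiff_phaseTail s) hg]
  refine norm_add₃_le.trans ?_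
  simp only [norm_smul, Real.norm_eq_abs, abs_mul, abs_two]
  calc _ ≤ √(1 + x ^ 2) ^ 2 * phaseCutoff s x * ‖iteratedDeriv 2 g x‖ +
        2 * (2 * √(1 + x ^ 2) * phaseCutoff s x) * ‖deriv g x‖ +
        6 * phaseCutoff s x * ‖g x‖ := by rw [htail]; gcongr
    _ = _ := by ring

lemma weightedSobolevDensity_one_two_mul_sqrt (g : ℝ → E) (x : ℝ) :
    weightedSobolevDensity 1 2 g x * √(1 + x ^ 2) =
      ‖g x‖ + √(1 + x ^ 2) * ‖deriv g x‖ + √(1 + x ^ 2) ^ 2 * ‖iteratedDeriv 2 g x‖ := by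
  have : 0 < √(1 + x ^ 2) := by positivity
  simp only [weightedSobolevDensity, Finset.sum_range_succ, Finset.sum_range_zero,
    iteratedDeriv_zero, iteratedDeriv_one]
  norm_num
  field_simp

lemma norm_phaseCutoff_smul_add_norm_iteratedDeriv_two_le (hg : ContDiff ℝ 2 g) (s x : ℝ) :
    ‖phaseCutoff s x • g x‖ + ‖iteratedDeriv 2 (phaseTail s • g) x‖ ≤
      7 * weightedSobolevDensity 1 2 g x * (√(1 + x ^ 2) * phaseCutoff s x) := by
  have hκ := phaseCutoff_pos s x
  calc _ ≤ phaseCutoff s x * ‖g x‖ +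
        phaseCutoff s x * (√(1 + x ^ 2) ^ 2 * ‖iteratedDeriv 2 g x‖ +
          4 * √(1 + x ^ 2) * ‖deriv g x‖ + 6 * ‖g x‖) := by
        rw [norm_smul, Real.norm_of_nonneg hκ.le]
        gcongr
        exact norm_iteratedDeriv_two_phaseTail_smul_le hg s x
    _ = phaseCutoff s x * (√(1 + x ^ 2) ^ 2 * ‖iteratedDeriv 2 g x‖ +
        4 * (√(1 + x ^ 2) * ‖deriv g x‖) + 7 * ‖g x‖) := by ring
    _ ≤ phaseCutoff s x * (7 * (‖g x‖ + √(1 + x ^ 2) * ‖deriv g x‖ +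
        √(1 + x ^ 2) ^ 2 * ‖iteratedDeriv 2 g x‖)) := by
        gcongr
        have : 0 ≤ √(1 + x ^ 2) * ‖deriv g x‖ := by positivity
        have : 0 ≤ √(1 + x ^ 2) ^ 2 * ‖iteratedDeriv 2 g x‖ := by positivity
        linarith
    _ = _ := by rw [← weightedSobolevDensity_one_two_mul_sqrt]; ring

end WeightedSobolev

section Fourier

variable {E : Type*} [NormedAddCommGroup E] [NormedSpace ℂ E] {g : ℝ → E}

lemma norm_fourier_le_integral_norm (g : ℝ → E) (t : ℝ) : ‖𝓕 g t‖ ≤ ∫ x, ‖g x‖ :=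
  VectorFourier.norm_fourierIntegral_le_integral_norm _ _ _ _ _

lemma continuous_fourier (hg : Integrable g) : Continuous (𝓕 g) :=
  VectorFourier.fourierIntegral_continuous Real.continuous_fourierChar (by fun_prop) hg

lemma fourier_add_const_smul {u v : ℝ → E} (hu : Integrable u) (hv : Integrable v) (c t : ℝ) :
    𝓕 (u + c • v) t = 𝓕 u t + c • 𝓕 v t := by
  have hsmul : 𝓕 (c • v) = c • 𝓕 v :=
    VectorFourier.fourierIntegral_const_smul _ _ _ v (c : ℂ)
  have hadd : 𝓕 (u + c • v) = 𝓕 u + 𝓕 (c • v) :=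
    VectorFourier.fourierIntegral_add Real.continuous_fourierChar (by fun_prop) hu (hv.smul c)
  rw [hadd, hsmul, Pi.add_apply, Pi.smul_apply]

lemma abs_mul_norm_fourier_eq_norm_fourier_deriv (hg : Integrable g)
    (hd : Differentiable ℝ g) (hg' : Integrable (deriv g)) (t : ℝ) :
    |2 * π * t| * ‖𝓕 g t‖ = ‖𝓕 (deriv g) t‖ := by
  rw [Real.fourier_deriv hg hd hg', norm_smul]
  simp [abs_mul]

lemma fourier_iteratedDeriv_two (hg : ContDiff ℝ 2 g) (hs : HasCompactSupport g)
    (t : ℝ) : 𝓕 (iteratedDeriv 2 g) t = -((2 * π * t) ^ 2 • 𝓕 g t) := by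
  have h := Real.fourier_iteratedDeriv (N := 2) (n := 2) (mod_cast hg)
    (fun l hl => integrable_iteratedDeriv hg hs (mod_cast hl)) le_rfl
  have hsymbol : (2 * π * Complex.I * t) ^ 2 = -(((2 * π * t) ^ 2 : ℝ) : ℂ) := by
    push_cast
    linear_combination (2 * π * t : ℂ) ^ 2 * Complex.I_sq
  simp only [h, hsymbol, neg_smul, Complex.coe_smul]

lemma fourier_eq_fourier_phaseCutoff_smul_sub (hg : ContDiff ℝ 2 g)
    (hs : HasCompactSupport g) (t : ℝ) :
    𝓕 g t = 𝓕 (phaseCutoff (2 * π * t) • g) t -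
      𝓕 (iteratedDeriv 2 (phaseTail (2 * π * t) • g)) t := by
  set s := 2 * π * t with hs_def
  have htail : ContDiff ℝ 2 (phaseTail s • g) := (contDiff_phaseTail s).smul hg
  have hcut_int : Integrable (phaseCutoff s • g) :=
    ((continuous_phaseCutoff s).smul hg.continuous).integrable_of_hasCompactSupport hs.smul_left
  have htail_int : Integrable (phaseTail s • g) :=
    htail.continuous.integrable_of_hasCompactSupport hs.smul_left
  have hsplit : phaseCutoff s • g + s ^ 2 • (phaseTail s • g) = g := by
    ext x
    simp only [Pi.add_apply, Pi.smul_apply, Pi.smul_apply', smul_smul, ← add_smul,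
      phaseCutoff_add_sq_mul_phaseTail, one_smul]
  rw [fourier_iteratedDeriv_two htail hs.smul_left, sub_neg_eq_add, ← hs_def,
    ← fourier_add_const_smul hcut_int htail_int, hsplit]

lemma norm_fourier_le_integral_weightedSobolevDensity (hg : ContDiff ℝ 2 g)
    (hs : HasCompactSupport g) (t : ℝ) :
    ‖𝓕 g t‖ ≤ ∫ x, 7 * weightedSobolevDensity 1 2 g x *
      (√(1 + x ^ 2) * phaseCutoff (2 * π * t) x) := by
  set s := 2 * π * t
  have hcut_int : Integrable fun x => ‖(phaseCutoff s • g) x‖ :=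
    (((continuous_phaseCutoff s).smul hg.continuous).integrable_of_hasCompactSupport
      hs.smul_left).norm
  have htail_int : Integrable fun x => ‖iteratedDeriv 2 (phaseTail s • g) x‖ :=
    (integrable_iteratedDeriv ((contDiff_phaseTail s).smul hg) hs.smul_left le_rfl).norm
  have hcutoff_cont : Continuous fun x : ℝ => √(1 + x ^ 2) * phaseCutoff s x := by fun_prop
  have hbound_int : Integrable fun x =>
      7 * weightedSobolevDensity 1 2 g x * (√(1 + x ^ 2) * phaseCutoff s x) :=
    ((continuous_weightedSobolevDensity 1 hg).const_mul 7 |>.mul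
      hcutoff_cont).integrable_of_hasCompactSupport
      (hasCompactSupport_weightedSobolevDensity 1 2 hs).mul_left.mul_right
  rw [fourier_eq_fourier_phaseCutoff_smul_sub hg hs]
  calc _ ≤ (∫ x, ‖(phaseCutoff s • g) x‖) + ∫ x, ‖iteratedDeriv 2 (phaseTail s • g) x‖ :=
        (norm_sub_le _ _).trans <|
          add_le_add (norm_fourier_le_integral_norm _ t) (norm_fourier_le_integral_norm _ t)
    _ = ∫ x, (‖(phaseCutoff s • g) x‖ + ‖iteratedDeriv 2 (phaseTail s • g) x‖) :=
        (integral_add hcut_int htail_int).symm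
    _ ≤ _ := integral_mono (hcut_int.add htail_int) hbound_int
        (norm_phaseCutoff_smul_add_norm_iteratedDeriv_two_le hg s)

theorem integrable_fourier (hg : ContDiff ℝ 2 g) (hs : HasCompactSupport g) :
    Integrable (𝓕 g) :=
  (integrable_prod_mul_phaseCutoff
      ((integrable_weightedSobolevDensity 1 hg hs).const_mul 7)).integral_prod_right.mono'
    (continuous_fourier
      (hg.continuous.integrable_of_hasCompactSupport hs)).aestronglyMeasurable
    (.of_forall (norm_fourier_le_integral_weightedSobolevDensity hg hs))

theorem integral_norm_fourier_le (hg : ContDiff ℝ 2 g) (hs : HasCompactSupport g) :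
    ∫ t, ‖𝓕 g t‖ ≤ 7 / 2 * ∫ x, weightedSobolevDensity 1 2 g x := by
  have hdensity := (integrable_weightedSobolevDensity 1 hg hs).const_mul 7
  calc ∫ t, ‖𝓕 g t‖
      ≤ ∫ t, ∫ x, 7 * weightedSobolevDensity 1 2 g x *
          (√(1 + x ^ 2) * phaseCutoff (2 * π * t) x) :=
        integral_mono (integrable_fourier hg hs).norm
          (integrable_prod_mul_phaseCutoff hdensity).integral_prod_right
          (norm_fourier_le_integral_weightedSobolevDensity hg hs)
    _ = 1 / 2 * ∫ x, 7 * weightedSobolevDensity 1 2 g x :=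
        integral_integral_mul_phaseCutoff hdensity
    _ = 7 / 2 * ∫ x, weightedSobolevDensity 1 2 g x := by rw [integral_const_mul]; ring

end Fourier

section UnitaryFlow

variable {𝓐 : Type*} [CStarAlgebra 𝓐]

/-- The one-parameter group `t ↦ e^{ita}`, which is unitary when `a` is self-adjoint. -/
noncomputable def unitaryFlow (a : 𝓐) (t : ℝ) : 𝓐 := NormedSpace.exp (t • (Complex.I • a))

lemma unitaryFlow_zero (a : 𝓐) : unitaryFlow a 0 = 1 := by simp [unitaryFlow]

lemma unitaryFlow_mul_unitaryFlow_neg (a : 𝓐) (t : ℝ) :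
    unitaryFlow a t * unitaryFlow a (-t) = 1 := by
  let _ : NormedAlgebra ℚ 𝓐 := NormedAlgebra.restrictScalars ℚ ℂ 𝓐
  rw [unitaryFlow, unitaryFlow, neg_smul,
    ← NormedSpace.exp_add_of_commute (Commute.refl _).neg_right, add_neg_cancel,
    NormedSpace.exp_zero]

lemma hasDerivAt_unitaryFlow (a : 𝓐) (t : ℝ) :
    HasDerivAt (unitaryFlow a) ((Complex.I • a) * unitaryFlow a t) t :=
  hasDerivAt_exp_smul_const' _ _

lemma hasDerivAt_unitaryFlow_neg (a : 𝓐) (t : ℝ) :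
    HasDerivAt (fun t => unitaryFlow a (-t)) (-(unitaryFlow a (-t) * (Complex.I • a))) t := by
  have h : HasDerivAt (unitaryFlow a) (unitaryFlow a (-t) * (Complex.I • a)) (-t) :=
    hasDerivAt_exp_smul_const _ _
  exact (h.scomp t (hasDerivAt_neg t)).congr_deriv (neg_one_smul _ _)

@[fun_prop]
lemma continuous_unitaryFlow (a : 𝓐) : Continuous (unitaryFlow a) :=
  continuous_iff_continuousAt.2 fun t => (hasDerivAt_unitaryFlow a t).continuousAt

variable {a b : 𝓐}

lemma unitaryFlow_mem_unitary (ha : IsSelfAdjoint a) (t : ℝ) : unitaryFlow a t ∈ unitary 𝓐 := by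
  have h := (selfAdjoint.expUnitary (t • (⟨a, ha⟩ : selfAdjoint 𝓐))).2
  rw [selfAdjoint.expUnitary_coe] at h
  rw [unitaryFlow, smul_comm]
  exact h

lemma norm_mul_unitaryFlow_sub_unitaryFlow_mul_le (ha : IsSelfAdjoint a) (hb : IsSelfAdjoint b)
    (x : 𝓐) (t : ℝ) :
    ‖x * unitaryFlow a t - unitaryFlow b t * x‖ ≤ ‖x * a - b * x‖ * |t| := by
  have hderiv (t : ℝ) : HasDerivAt (fun t => unitaryFlow b (-t) * (x * unitaryFlow a t))
      (unitaryFlow b (-t) * (Complex.I • (x * a - b * x) * unitaryFlow a t)) t := by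
    refine ((hasDerivAt_unitaryFlow_neg b t).mul
      ((hasDerivAt_unitaryFlow a t).const_mul x)).congr_deriv ?_
    simp only [smul_mul_assoc, mul_smul_comm, ← smul_neg, ← smul_add]
    noncomm_ring
  have hnorm (t : ℝ) :
      ‖unitaryFlow b (-t) * (Complex.I • (x * a - b * x) * unitaryFlow a t)‖ ≤
        ‖x * a - b * x‖ := by
    rw [CStarRing.norm_mem_unitary_mul _ (unitaryFlow_mem_unitary hb _),
      CStarRing.norm_mul_mem_unitary _ (unitaryFlow_mem_unitary ha _), norm_smul, Complex.norm_I,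
      one_mul]
  have hmvt := convex_univ.norm_image_sub_le_of_norm_hasDerivWithin_le
    (fun t _ => (hderiv t).hasDerivWithinAt) (fun t _ => hnorm t) (Set.mem_univ 0) (Set.mem_univ t)
  simp only [neg_zero, unitaryFlow_zero, mul_one, one_mul, sub_zero, Real.norm_eq_abs] at hmvt
  rwa [← CStarRing.norm_mem_unitary_mul _ (unitaryFlow_mem_unitary hb t), mul_sub, ← mul_assoc,
    unitaryFlow_mul_unitaryFlow_neg, one_mul] at hmvt

lemma cfc_cexp_mul_I (ha : IsSelfAdjoint a) (t : ℝ) :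
    cfc (fun z : ℂ => Complex.exp (t * z * Complex.I)) a = unitaryFlow a t := by
  have hnormal : IsStarNormal ((t * Complex.I) • a) := by
    have := ha.isStarNormal
    infer_instance
  have hexp : (fun z : ℂ => Complex.exp (t * z * Complex.I)) =
      fun z => Complex.exp ((t * Complex.I) • z) := by
    ext z
    rw [smul_eq_mul, mul_right_comm]
  rw [hexp, cfc_comp_smul _ Complex.exp a (by fun_prop) ha.isStarNormal,
    CFC.complex_exp_eq_normedSpace_exp hnormal, unitaryFlow, mul_smul, Complex.coe_smul]

variable {F : ℝ → ℂ}

lemma integrable_smul_unitaryFlow (ha : IsSelfAdjoint a) (hF : Integrable F) :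
    Integrable fun t => F t • unitaryFlow a (2 * π * t) := by
  refine (hF.norm.mul_const ‖(1 : 𝓐)‖).mono' ?_ (.of_forall fun t => ?_)
  · exact hF.aestronglyMeasurable.smul (Continuous.aestronglyMeasurable (by fun_prop))
  · rw [norm_smul, ← mul_one (unitaryFlow a _),
      CStarRing.norm_mem_unitary_mul _ (unitaryFlow_mem_unitary ha _)]

lemma cfc_integral_cexp_mul (ha : IsSelfAdjoint a) (hFc : Continuous F) (hF : Integrable F) :
    cfc (fun z : ℂ => ∫ t : ℝ, Complex.exp ((2 * π * t : ℝ) * z * Complex.I) * F t) a =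
      ∫ t, F t • unitaryFlow a (2 * π * t) := by
  have hcfc (t : ℝ) :
      cfc (fun z : ℂ => Complex.exp ((2 * π * t : ℝ) * z * Complex.I) * F t) a =
        F t • unitaryFlow a (2 * π * t) := by
    simp only [mul_comm _ (F t)]
    rw [cfc_const_mul _ _ _ (by fun_prop), cfc_cexp_mul_I ha]
  simp only [← hcfc]
  refine cfc_integral _ (fun t => ‖F t‖) a ?_ (.of_forall fun t z hz => ?_) hF.norm.2
    ha.isStarNormal
  · exact Continuous.continuousOn (by unfold Function.uncurry; fun_prop)
  · rw [norm_mul, ha.mem_spectrum_eq_re hz, ← Complex.ofReal_mul, Complex.norm_exp_ofReal_mul_I,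
      one_mul]

lemma ofReal_eq_integral_cexp_mul_fourier {f : ℝ → ℝ} (hf : Continuous f) (hfi : Integrable f)
    (hF : Integrable (𝓕 fun x => (f x : ℂ))) (x : ℝ) :
    (f x : ℂ) = ∫ t : ℝ, Complex.exp ((2 * π * t : ℝ) * (x : ℂ) * Complex.I) *
      𝓕 (fun x => (f x : ℂ)) t := by
  have h := congrFun
    (Continuous.fourierInv_fourier_eq (f := fun x => (f x : ℂ)) (by fun_prop) hfi.ofReal hF) x
  rw [Real.fourierInv_eq'] at h
  rw [← h]
  refine integral_congr_ae (.of_forall fun t => ?_)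
  simp only [smul_eq_mul, RCLike.inner_apply, conj_trivial]
  push_cast
  ring_nf

lemma cfc_eq_integral_fourier_smul_unitaryFlow (ha : IsSelfAdjoint a) {f : ℝ → ℝ}
    (hf : Continuous f) (hfi : Integrable f) (hF : Integrable (𝓕 fun x => (f x : ℂ))) :
    cfc f a = ∫ t, 𝓕 (fun x => (f x : ℂ)) t • unitaryFlow a (2 * π * t) := by
  rw [cfc_real_eq_complex f ha]
  refine (cfc_congr fun z hz => ?_).trans
    (cfc_integral_cexp_mul ha (continuous_fourier hfi.ofReal) hF)
  rw [ofReal_eq_integral_cexp_mul_fourier hf hfi hF, ← ha.mem_spectrum_eq_re hz]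

end UnitaryFlow

section CommutatorLipschitz

/-- `f` is commutator Lipschitz on `𝓐` with constant `L`. Allowing different operators on the two
sides of `x` covers both commutators (`a = b`) and operator Lipschitz estimates (`x = 1`). -/
def CommutatorLipschitzWith (𝓐 : Type*) [CStarAlgebra 𝓐] (L : ℝ) (f : ℝ → ℝ) : Prop :=
  ∀ ⦃a b : 𝓐⦄, IsSelfAdjoint a → IsSelfAdjoint b → ∀ x : 𝓐,
    ‖x * cfc f a - cfc f b * x‖ ≤ L * ‖x * a - b * x‖

variable {𝓐 : Type*} [CStarAlgebra 𝓐] {f : ℝ → ℝ}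

lemma CommutatorLipschitzWith.mono {L M : ℝ} (hL : CommutatorLipschitzWith 𝓐 L f) (hLM : L ≤ M) :
    CommutatorLipschitzWith 𝓐 M f := fun _ _ ha hb x =>
  (hL ha hb x).trans (by gcongr)

lemma commutatorLipschitzWith_integral_fourier (hf : Continuous f) (hfi : Integrable f)
    (hF : Integrable (𝓕 fun x => (f x : ℂ)))
    (hF' : Integrable fun t => |2 * π * t| * ‖𝓕 (fun x => (f x : ℂ)) t‖) :
    CommutatorLipschitzWith 𝓐 (∫ t, |2 * π * t| * ‖𝓕 (fun x => (f x : ℂ)) t‖) f := by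
  intro a b ha hb x
  have hia := integrable_smul_unitaryFlow ha hF
  have hib := integrable_smul_unitaryFlow hb hF
  rw [cfc_eq_integral_fourier_smul_unitaryFlow ha hf hfi hF,
    cfc_eq_integral_fourier_smul_unitaryFlow hb hf hfi hF,
    ← integral_const_mul_of_integrable hia, ← integral_mul_const_of_integrable hib,
    ← integral_sub (hia.const_mul x) (hib.mul_const x), ← integral_mul_const]
  refine norm_integral_le_of_norm_le (hF'.mul_const _) (.of_forall fun t => ?_)
  rw [mul_smul_comm, smul_mul_assoc, ← smul_sub, norm_smul]
  calc _ ≤ ‖𝓕 (fun x => (f x : ℂ)) t‖ * (‖x * a - b * x‖ * |2 * π * t|) := by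
        gcongr
        exact norm_mul_unitaryFlow_sub_unitaryFlow_mul_le ha hb x _
    _ = _ := by ring

theorem commutatorLipschitzWith_integral_weightedSobolevDensity (hf : ContDiff ℝ 3 f)
    (hs : HasCompactSupport f) :
    CommutatorLipschitzWith 𝓐 (7 / 2 * ∫ x, weightedSobolevDensity 1 2 (deriv f) x) f := by
  set g : ℝ → ℂ := fun x => f x with hg_def
  have hg : ContDiff ℝ 3 g := Complex.ofRealCLM.contDiff.comp hf
  have hgs : HasCompactSupport g := hs.comp_left Complex.ofReal_zero
  have hf' : ContDiff ℝ 2 (deriv f) := hf.deriv' (n := 2)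
  have hg' : ContDiff ℝ 2 (deriv g) := hg.deriv' (n := 2)
  have hderiv : deriv g = Complex.ofRealLI ∘ deriv f :=
    funext fun x => ((hf.differentiable (by norm_num) x).hasDerivAt.ofReal_comp).deriv
  have hfourier : (fun t => |2 * π * t| * ‖𝓕 g t‖) = fun t => ‖𝓕 (deriv g) t‖ :=
    funext <| abs_mul_norm_fourier_eq_norm_fourier_deriv
      (hg.continuous.integrable_of_hasCompactSupport hgs) (hg.differentiable (by norm_num))
      (hg'.continuous.integrable_of_hasCompactSupport hgs.deriv)
  refine (commutatorLipschitzWith_integral_fourier hf.continuous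
    (hf.continuous.integrable_of_hasCompactSupport hs)
    (integrable_fourier (hg.of_le (by norm_num)) hgs) ?_).mono ?_
  · rw [← hg_def, hfourier]
    exact (integrable_fourier hg' hgs.deriv).norm
  · rw [← hg_def, hfourier]
    refine (integral_norm_fourier_le hg' hgs.deriv).trans_eq ?_
    simp only [hderiv, weightedSobolevDensity_linearIsometry_comp 1 hf']

end CommutatorLipschitz

lemma Nseminorm_nonneg (n : ℕ) (f : ℝ → ℝ) : 0 ≤ Nseminorm n f :=
  integral_nonneg fun x => by positivity

lemma Nseminorm_eq_integral_weightedSobolevDensity (n : ℕ) (f : ℝ → ℝ) :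
    Nseminorm n f = ∫ x, weightedSobolevDensity 2 n f x := by
  refine integral_congr_ae (.of_forall fun x => ?_)
  simp only [weightedSobolevDensity, Finset.sum_mul]
  refine Finset.sum_congr rfl fun l _ => ?_
  rw [mul_assoc, ← zpow_add₀ (by positivity), sub_add_sub_cancel, mul_comm, Real.norm_eq_abs]

theorem commutatorLipschitzWith_Nseminorm {𝓐 : Type*} [CStarAlgebra 𝓐] {n : ℕ} (hn : 3 ≤ n)
    {f : ℝ → ℝ} (hf : ContDiff ℝ n f) (hs : HasCompactSupport f) :
    CommutatorLipschitzWith 𝓐 (7 / 2 * Nseminorm n f) f := by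
  have hf3 : ContDiff ℝ 3 f := hf.of_le (mod_cast hn)
  refine (commutatorLipschitzWith_integral_weightedSobolevDensity hf3 hs).mono ?_
  rw [Nseminorm_eq_integral_weightedSobolevDensity]
  gcongr 7 / 2 * ?_
  exact integral_mono (integrable_weightedSobolevDensity 1 (hf3.deriv' (n := 2)) hs.deriv)
    (integrable_weightedSobolevDensity 2 hf hs) fun x =>
      (weightedSobolevDensity_deriv_le 1 2 x).trans (weightedSobolevDensity_mono 2 hn x)

section Compression

variable {𝓐 : Type*} [CStarAlgebra 𝓐] {a p j : 𝓐} {f : ℝ → ℝ} {L : ℝ}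

/-- The operator `𝒟(a, p; f)` in an arbitrary C⋆-algebra: the failure of the functional calculus
to commute with compression by `p`. -/
noncomputable def compressionDefect (a p : 𝓐) (f : ℝ → ℝ) : 𝓐 :=
  p * cfc f (p * a * p) * p - p * cfc f a * p

lemma norm_mul_le_of_isStarProjection (hp : IsStarProjection p) (x : 𝓐) : ‖x * p‖ ≤ ‖x‖ :=
  (norm_mul_le _ _).trans (mul_le_of_le_one_right (norm_nonneg _) hp.norm_le)

lemma norm_mul_mul_le_of_isStarProjection (hp : IsStarProjection p) (x : 𝓐) :
    ‖p * x * p‖ ≤ ‖x‖ :=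
  (norm_mul_le_of_isStarProjection hp _).trans <|
    (norm_mul_le _ _).trans (mul_le_of_le_one_left (norm_nonneg _) hp.norm_le)

lemma commute_cfc_compression (hp : IsStarProjection p) : Commute p (cfc f (p * a * p)) := by
  refine (Commute.cfc_real ?_ f).symm
  rw [commute_iff_eq, mul_assoc _ p p, ← mul_assoc p (p * a) p, ← mul_assoc p p a,
    hp.isIdempotentElem.eq]

lemma mul_compression_sub_compression_mul (hpj : Commute p j) :
    j * (p * a * p) - p * a * p * j = p * (j * a - a * j) * p := by
  simp only [mul_sub, sub_mul, mul_assoc, hpj.eq, hpj.symm.left_comm]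

lemma mul_compressionDefect (hp : IsStarProjection p) :
    j * compressionDefect a p f =
      (j * cfc f (p * a * p) - cfc f (p * a * p) * j) * p -
        (j * p * cfc f a - cfc f (p * a * p) * (j * p)) * p := by
  have hpp := hp.isIdempotentElem
  have hfp := commute_cfc_compression (a := a) (f := f) hp
  rw [compressionDefect]
  generalize cfc f (p * a * p) = y at hfp ⊢
  simp only [mul_sub, sub_mul, mul_assoc, hfp.symm.eq, hpp.eq, hpp.mul_self_mul]
  abel

lemma compressionDefect_mul (hp : IsStarProjection p) (hpj : Commute p j) :
    compressionDefect a p f * j =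
      p * (j * cfc f a - cfc f a * j) * p -
        (j * p * cfc f a - cfc f (p * a * p) * (j * p)) * p := by
  have hpp := hp.isIdempotentElem
  have hfp := commute_cfc_compression (a := a) (f := f) hp
  rw [compressionDefect]
  generalize cfc f (p * a * p) = y at hfp ⊢
  simp only [mul_sub, sub_mul, mul_assoc, hpj.symm.eq, hfp.symm.left_comm, hpp.mul_self_mul]
  abel

lemma CommutatorLipschitzWith.norm_intertwiner_sub_le (hf : CommutatorLipschitzWith 𝓐 L f)
    (hL : 0 ≤ L) (ha : IsSelfAdjoint a) (hp : IsStarProjection p) (hpj : Commute p j) :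
    ‖j * p * cfc f a - cfc f (p * a * p) * (j * p)‖ ≤
      L * (‖j * p * a * (1 - p)‖ + ‖j * a - a * j‖) := by
  have hsplit : j * p * a - p * a * p * (j * p) =
      j * p * a * (1 - p) + p * (j * a - a * j) * p := by
    have hpp := hp.isIdempotentElem
    simp only [mul_sub, sub_mul, mul_assoc, mul_one, hpj.symm.eq, hpp.mul_self_mul]
    abel
  have ha' : IsSelfAdjoint (p * a * p) := ha.conjugate_self hp.isSelfAdjoint
  calc _ ≤ L * ‖j * p * a * (1 - p) + p * (j * a - a * j) * p‖ := hsplit ▸ hf ha ha' (j * p)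
    _ ≤ L * (‖j * p * a * (1 - p)‖ + ‖j * a - a * j‖) := by
      gcongr
      exact norm_add_le_of_le le_rfl (norm_mul_mul_le_of_isStarProjection hp _)

theorem CommutatorLipschitzWith.norm_mul_compressionDefect_le
    (hf : CommutatorLipschitzWith 𝓐 L f) (hL : 0 ≤ L) (ha : IsSelfAdjoint a)
    (hp : IsStarProjection p) (hpj : Commute p j) :
    ‖j * compressionDefect a p f‖ ≤ 2 * L * (‖j * p * a * (1 - p)‖ + ‖j * a - a * j‖) := by
  have ha' : IsSelfAdjoint (p * a * p) := ha.conjugate_self hp.isSelfAdjoint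
  have hcomm : ‖j * cfc f (p * a * p) - cfc f (p * a * p) * j‖ ≤ L * ‖j * a - a * j‖ := by
    refine (hf ha' ha' j).trans ?_
    rw [mul_compression_sub_compression_mul hpj]
    gcongr
    exact norm_mul_mul_le_of_isStarProjection hp _
  have hinter := hf.norm_intertwiner_sub_le hL ha hp hpj
  rw [mul_compressionDefect hp]
  refine (norm_sub_le_of_le ((norm_mul_le_of_isStarProjection hp _).trans hcomm)
    ((norm_mul_le_of_isStarProjection hp _).trans hinter)).trans ?_
  linarith [mul_nonneg hL (norm_nonneg (j * p * a * (1 - p)))]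

theorem CommutatorLipschitzWith.norm_compressionDefect_mul_le
    (hf : CommutatorLipschitzWith 𝓐 L f) (hL : 0 ≤ L) (ha : IsSelfAdjoint a)
    (hp : IsStarProjection p) (hpj : Commute p j) :
    ‖compressionDefect a p f * j‖ ≤ 2 * L * (‖j * p * a * (1 - p)‖ + ‖j * a - a * j‖) := by
  have hcomm : ‖p * (j * cfc f a - cfc f a * j) * p‖ ≤ L * ‖j * a - a * j‖ :=
    (norm_mul_mul_le_of_isStarProjection hp _).trans (hf ha ha j)
  have hinter := hf.norm_intertwiner_sub_le hL ha hp hpj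
  rw [compressionDefect_mul hp hpj]
  refine (norm_sub_le_of_le hcomm
    ((norm_mul_le_of_isStarProjection hp _).trans hinter)).trans ?_
  linarith [mul_nonneg hL (norm_nonneg (j * p * a * (1 - p)))]

end Compression

theorem Dop_one_sided_bound_general {𝓐 : Type*} [CStarAlgebra 𝓐] {n : ℕ} (hn : 3 ≤ n)
    {a p j : 𝓐} {f : ℝ → ℝ} (ha : IsSelfAdjoint a) (hp : IsStarProjection p) (hpj : Commute p j)
    (hf : ContDiff ℝ n f) (hs : HasCompactSupport f) :
    ‖j * compressionDefect a p f‖ + ‖compressionDefect a p f * j‖ ≤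
      14 * Nseminorm n f * (‖j * p * a * (1 - p)‖ + ‖a * j - j * a‖) := by
  have hL : 0 ≤ 7 / 2 * Nseminorm n f := mul_nonneg (by norm_num) (Nseminorm_nonneg n f)
  have hlip := commutatorLipschitzWith_Nseminorm (𝓐 := 𝓐) hn hf hs
  have hleft := hlip.norm_mul_compressionDefect_le hL ha hp hpj
  have hright := hlip.norm_compressionDefect_mul_le hL ha hp hpj
  rw [norm_sub_rev (a * j)]
  linarith

/-- For `n ≥ 3` there is `C = C(n)` such that for every bounded self-adjoint `A`, every
orthogonal projection `P`, every bounded `J` commuting with `P`, and every compactly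
supported `f ∈ Cⁿ(ℝ)`:
`‖J 𝒟(A,P;f)‖ + ‖𝒟(A,P;f) J‖ ≤ C N_n(f) (‖J P A (I−P)‖ + ‖[A,J]‖)`. -/
theorem Dop_one_sided_bound (n : ℕ) (hn : 3 ≤ n) :
    ∃ C : ℝ, ∀ (H : Type*) [NormedAddCommGroup H] [InnerProductSpace ℂ H] [CompleteSpace H]
      (A P J : H →L[ℂ] H) (f : ℝ → ℝ),
      IsSelfAdjoint A → IsSelfAdjoint P → IsIdempotentElem P →
      P * J - J * P = 0 →
      ContDiff ℝ n f → HasCompactSupport f →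
      ‖J * Dop A P f‖ + ‖Dop A P f * J‖
        ≤ C * Nseminorm n f * (‖J * P * A * (1 - P)‖ + ‖A * J - J * A‖) :=
  ⟨14, fun _ _ _ _ _ _ _ _ hA hP hPP hPJ hf hs =>
    Dop_one_sided_bound_general hn hA ⟨hPP, hP⟩ (sub_eq_zero.1 hPJ) hf hs⟩
end

section
/- Let n ≥ 2 be an integer. There is a constant C, depending only on n, such that every f ∈ Cⁿ(ℝ) admits a quasi-analytic extension f̃ ∈ C¹(ℝ²; ℂ) with the properties: f̃(x,0) = f(x) for all x ∈ ℝ; f̃(x,y) = 0 whenever |y| > ⟨x⟩; and the Cauchy–Riemann derivative 𝒵(x,y) = ½(∂_x f̃(x,y) + i ∂_y f̃(x,y)) satisfies |𝒵(x,y)| ≤ C · F(x) · |y|^{n−1} for all (x,y) with |y| < ⟨x⟩ (and 𝒵(x,y) = 0 for |y| > ⟨x⟩). -/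
open scoped BigOperators

/-- `F(x) = Σ_{l=0}^n |f^{(l)}(x)| ⟨x⟩^{−n+l}` with `⟨x⟩ = √(1+x²)`. -/
noncomputable def Fweight (n : ℕ) (f : ℝ → ℝ) (x : ℝ) : ℝ :=
  ∑ l ∈ Finset.range (n + 1),
    |iteratedDeriv l f x| * Real.sqrt (1 + x ^ 2) ^ ((l : ℤ) - (n : ℤ))

/-- The Cauchy–Riemann derivative `𝒵 = ∂f̃/∂z̄ = ½(∂_x f̃ + i ∂_y f̃)`. -/
noncomputable def CRderiv (ft : ℝ × ℝ → ℂ) (x y : ℝ) : ℂ :=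
  (1 / 2) * (deriv (fun s : ℝ => ft (s, y)) x + Complex.I * deriv (fun s : ℝ => ft (x, s)) y)

/-!
Let `P(x, y) = ∑_{l<n} f⁽ˡ⁾(x) (iy)ˡ / l!`. Since `∂_y ((iy)ˡ⁺¹ / (l+1)!) = i (iy)ˡ / l!`, the sum
for `∂_x P + i ∂_y P` telescopes to `f⁽ⁿ⁾(x) (iy)ⁿ⁻¹ / (n-1)!`. Multiplying `P` by the cutoff
`χ(y / ρ(x))` adds the term `∂̄χ · P`, which lives where `ρ / 2 < |y| < ρ`. There `|∂̄χ| = O(1 / ρ)`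
because `ρ'` is bounded, and `ρⁿ⁻¹` may be traded for `|y|ⁿ⁻¹`.
-/

open Complex Finset

section CauchyRiemann

variable {E : Type*} [NormedAddCommGroup E] [NormedSpace ℂ E]

/-- The Cauchy–Riemann derivative `½(∂_x g + i ∂_y g)` of a vector-valued function; for `E = ℂ` it
is `CRderiv`. -/
noncomputable def dbar (g : ℝ × ℝ → E) (x y : ℝ) : E :=
  (1 / 2 : ℂ) • (deriv (fun s => g (s, y)) x + I • deriv (fun s => g (x, s)) y)

lemma CRderiv_eq_dbar (g : ℝ × ℝ → ℂ) : CRderiv g = dbar g := rfl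

lemma dbar_eq_of_hasDerivAt {g : ℝ × ℝ → E} {x y : ℝ} {gx gy : E}
    (hx : HasDerivAt (fun s => g (s, y)) gx x) (hy : HasDerivAt (fun s => g (x, s)) gy y) :
    dbar g x y = (1 / 2 : ℂ) • (gx + I • gy) := by
  rw [dbar, hx.deriv, hy.deriv]

lemma dbar_smul {χ : ℝ × ℝ → ℂ} {g : ℝ × ℝ → E} {x y : ℝ}
    (hχ : DifferentiableAt ℝ χ (x, y)) (hg : DifferentiableAt ℝ g (x, y)) :
    dbar (fun p => χ p • g p) x y = χ (x, y) • dbar g x y + dbar χ x y • g (x, y) := by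
  have hx : DifferentiableAt ℝ (fun s : ℝ => (s, y)) x := by fun_prop
  have hy : DifferentiableAt ℝ (fun s : ℝ => (x, s)) y := by fun_prop
  have hχx := (hχ.comp x hx).hasDerivAt
  have hχy := (hχ.comp y hy).hasDerivAt
  have hgx := (hg.comp x hx).hasDerivAt
  have hgy := (hg.comp y hy).hasDerivAt
  rw [dbar_eq_of_hasDerivAt (hχx.smul hgx) (hχy.smul hgy), dbar_eq_of_hasDerivAt hχx hχy,
    dbar_eq_of_hasDerivAt hgx hgy]
  simp only [Function.comp_apply, smul_eq_mul]
  module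

end CauchyRiemann

section TaylorExtension

variable {E : Type*} [NormedAddCommGroup E] [NormedSpace ℂ E] {f : ℝ → E} {n : ℕ}

/-- The Taylor polynomial of `f` at `x` with `n` terms, evaluated formally at `x + iy`. -/
noncomputable def taylorExtension (n : ℕ) (f : ℝ → E) (p : ℝ × ℝ) : E :=
  ∑ l ∈ range n, ((I * p.2) ^ l / l.factorial : ℂ) • iteratedDeriv l f p.1

/-- The weighted size `∑ l ≤ n, ‖f⁽ˡ⁾(x)‖ ρ(x)^(l-n)` of the `n`-jet of `f`, relative to a length
scale `ρ`; for real `f` and `ρ(x) = √(1 + x²)` it is `Fweight`. -/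
noncomputable def jetWeight (ρ : ℝ → ℝ) (n : ℕ) (f : ℝ → E) (x : ℝ) : ℝ :=
  ∑ l ∈ range (n + 1), ‖iteratedDeriv l f x‖ * ρ x ^ ((l : ℤ) - (n : ℤ))

lemma taylorExtension_zero_right (hn : n ≠ 0) (f : ℝ → E) (x : ℝ) :
    taylorExtension n f (x, 0) = f x := by
  obtain ⟨m, rfl⟩ := Nat.exists_eq_succ_of_ne_zero hn
  simp [taylorExtension, sum_range_succ']

lemma contDiff_taylorExtension (hf : ContDiff ℝ n f) : ContDiff ℝ 1 (taylorExtension n f) := by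
  refine ContDiff.sum fun l hl => ContDiff.smul ?_ ?_
  · have hy : ContDiff ℝ 1 fun p : ℝ × ℝ => (p.2 : ℂ) := ofRealCLM.contDiff.comp contDiff_snd
    fun_prop
  · have hf' : ContDiff ℝ (l + 1 : ℕ) f := hf.of_le (by exact_mod_cast mem_range.mp hl)
    exact (contDiff_nat_succ_iff_contDiff_one_iteratedDeriv.mp hf').2.comp contDiff_fst

lemma hasDerivAt_taylorExtension_left (hf : ContDiff ℝ n f) (x y : ℝ) :
    HasDerivAt (fun s => taylorExtension n f (s, y))
      (∑ l ∈ range n, ((I * y) ^ l / l.factorial : ℂ) • iteratedDeriv (l + 1) f x) x := by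
  refine HasDerivAt.fun_sum fun l hl => ?_
  rw [iteratedDeriv_succ]
  have hl : (l : WithTop ℕ∞) < n := by exact_mod_cast mem_range.mp hl
  exact (hf.differentiable_iteratedDeriv l hl x).hasDerivAt.const_smul
    ((I * y) ^ l / l.factorial : ℂ)

lemma hasDerivAt_I_mul_pow_succ_div_factorial (l : ℕ) (y : ℝ) :
    HasDerivAt (fun s : ℝ => ((I * s) ^ (l + 1) / (l + 1).factorial : ℂ))
      (I * ((I * y) ^ l / l.factorial)) y := by
  have hpow : HasDerivAt (fun s : ℝ => (I * s : ℂ) ^ (l + 1)) ((l + 1) * (I * y) ^ l * I) y := by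
    simpa using ((hasDerivAt_id y).ofReal_comp.const_mul I).fun_pow (l + 1)
  have hl : (l + 1 : ℂ) ≠ 0 := by exact_mod_cast l.succ_ne_zero
  refine (hpow.div_const ((l + 1).factorial : ℂ)).congr_deriv ?_
  rw [Nat.factorial_succ, Nat.cast_mul, Nat.cast_succ]
  field_simp

lemma hasDerivAt_taylorExtension_right (n : ℕ) (f : ℝ → E) (x y : ℝ) :
    HasDerivAt (fun s => taylorExtension (n + 1) f (x, s))
      (∑ l ∈ range n, (I * ((I * y) ^ l / l.factorial) : ℂ) • iteratedDeriv (l + 1) f x) y := by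
  simp only [taylorExtension, sum_range_succ', pow_zero]
  exact (HasDerivAt.fun_sum fun l _ =>
    (hasDerivAt_I_mul_pow_succ_div_factorial l y).smul_const _).add_const _

lemma dbar_taylorExtension (hf : ContDiff ℝ (n + 1 : ℕ) f) (x y : ℝ) :
    dbar (taylorExtension (n + 1) f) x y =
      (1 / 2 : ℂ) • ((I * y) ^ n / n.factorial : ℂ) • iteratedDeriv (n + 1) f x := by
  rw [dbar_eq_of_hasDerivAt (hasDerivAt_taylorExtension_left hf x y)
    (hasDerivAt_taylorExtension_right n f x y), sum_range_succ, smul_sum]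
  simp only [smul_smul, ← mul_assoc, I_mul_I, neg_one_mul, neg_smul, sum_neg_distrib]
  module

lemma norm_I_mul_pow_div_factorial_le (l : ℕ) (y : ℝ) :
    ‖((I * y) ^ l / l.factorial : ℂ)‖ ≤ |y| ^ l := by
  rw [norm_div, norm_pow, norm_mul, norm_I, one_mul, norm_real, Real.norm_eq_abs, norm_natCast]
  exact div_le_self (by positivity) (by exact_mod_cast l.factorial_pos)

variable {ρ : ℝ → ℝ} {x y : ℝ}

lemma norm_iteratedDeriv_le_jetWeight (n : ℕ) (f : ℝ → E) (hρ : 0 ≤ ρ x) :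
    ‖iteratedDeriv n f x‖ ≤ jetWeight ρ n f x := by
  have h := single_le_sum (f := fun l : ℕ => ‖iteratedDeriv l f x‖ * ρ x ^ ((l : ℤ) - (n : ℤ)))
    (fun l _ => by positivity) (self_mem_range_succ n)
  simpa [jetWeight] using h

lemma norm_dbar_taylorExtension_le (hf : ContDiff ℝ (n + 1 : ℕ) f) (hρ : 0 ≤ ρ x) :
    ‖dbar (taylorExtension (n + 1) f) x y‖ ≤ 1 / 2 * jetWeight ρ (n + 1) f x * |y| ^ n := by
  rw [dbar_taylorExtension hf, norm_smul, norm_smul, mul_assoc, mul_comm (jetWeight _ _ _ _)]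
  gcongr
  · norm_num
  · exact norm_I_mul_pow_div_factorial_le n y
  · exact norm_iteratedDeriv_le_jetWeight (n + 1) f hρ

lemma norm_taylorExtension_le (n : ℕ) (f : ℝ → E) (hρ : 0 < ρ x) (hy : |y| ≤ ρ x) :
    ‖taylorExtension n f (x, y)‖ ≤ ρ x ^ n * jetWeight ρ n f x := by
  have hterm (l : ℕ) : ‖((I * y) ^ l / l.factorial : ℂ) • iteratedDeriv l f x‖ ≤
      ρ x ^ n * (‖iteratedDeriv l f x‖ * ρ x ^ ((l : ℤ) - (n : ℤ))) :=
    calc ‖((I * y) ^ l / l.factorial : ℂ) • iteratedDeriv l f x‖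
        ≤ ρ x ^ l * ‖iteratedDeriv l f x‖ := by
          rw [norm_smul]
          gcongr
          exact (norm_I_mul_pow_div_factorial_le l y).trans (by gcongr)
      _ = ρ x ^ n * (‖iteratedDeriv l f x‖ * ρ x ^ ((l : ℤ) - (n : ℤ))) := by
          rw [zpow_sub₀ hρ.ne', zpow_natCast, zpow_natCast]
          field_simp
  calc ‖taylorExtension n f (x, y)‖
      ≤ ∑ l ∈ range n, ρ x ^ n * (‖iteratedDeriv l f x‖ * ρ x ^ ((l : ℤ) - (n : ℤ))) :=
        norm_sum_le_of_le _ fun l _ => hterm l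
    _ ≤ ρ x ^ n * jetWeight ρ n f x := by
        rw [jetWeight, mul_sum]
        exact sum_le_sum_of_subset_of_nonneg (range_mono n.le_succ) fun l _ _ => by positivity

end TaylorExtension

section Cutoff

lemma dist_mem_Ioo_of_deriv_contDiffBump_ne_zero {c t : ℝ} {φ : ContDiffBump c}
    (h : deriv φ t ≠ 0) : dist t c ∈ Set.Ioo φ.rIn φ.rOut := by
  constructor <;> contrapose! h
  · have hmax : IsLocalMax φ t := Filter.Eventually.of_forall fun s => by
      rw [φ.one_of_mem_closedBall h]
      exact φ.le_one
    exact hmax.deriv_eq_zero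
  · have hmin : IsLocalMin φ t := Filter.Eventually.of_forall fun s => by
      rw [φ.zero_of_le_dist h]
      exact φ.nonneg
    exact hmin.deriv_eq_zero

lemma exists_abs_deriv_contDiffBump_le {c : ℝ} (φ : ContDiffBump c) :
    ∃ M, ∀ t, |deriv φ t| ≤ M :=
  φ.hasCompactSupport.deriv.exists_bound_of_continuous
    ((φ.contDiff (n := 1)).continuous_deriv le_rfl)

/-- A smooth bump function on `ℝ`, equal to `1` on `[-1/2, 1/2]` and supported in `[-1, 1]`. -/
noncomputable def unitBump : ContDiffBump (0 : ℝ) where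
  rIn := 1 / 2
  rOut := 1
  rIn_pos := by norm_num
  rIn_lt_rOut := by norm_num

/-- The cutoff `(x, y) ↦ χ(y / ρ(x))` localizing to the region `|y| < ρ(x)`. It is complex-valued
so that `dbar` applies to it. -/
noncomputable def cutoff (ρ : ℝ → ℝ) (p : ℝ × ℝ) : ℂ := (unitBump (p.2 / ρ p.1) : ℝ)

variable {ρ : ℝ → ℝ} {x y : ℝ}

lemma contDiff_cutoff (hρ : ContDiff ℝ 1 ρ) (hρ₀ : ∀ x, ρ x ≠ 0) : ContDiff ℝ 1 (cutoff ρ) :=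
  ofRealCLM.contDiff.comp <| unitBump.contDiff.comp <|
    contDiff_snd.div (hρ.comp contDiff_fst) fun p => hρ₀ p.1

lemma cutoff_zero_right (ρ : ℝ → ℝ) (x : ℝ) : cutoff ρ (x, 0) = 1 := by
  have h : unitBump 0 = 1 :=
    unitBump.one_of_mem_closedBall (Metric.mem_closedBall_self unitBump.rIn_pos.le)
  simp [cutoff, h]

lemma norm_cutoff_le_one (ρ : ℝ → ℝ) (p : ℝ × ℝ) : ‖cutoff ρ p‖ ≤ 1 := by
  rw [cutoff, norm_real, Real.norm_of_nonneg unitBump.nonneg]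
  exact unitBump.le_one

lemma cutoff_eq_zero (hρ : 0 < ρ x) (hy : ρ x ≤ |y|) : cutoff ρ (x, y) = 0 := by
  have h : 1 ≤ dist (y / ρ x) 0 := by
    rwa [Real.dist_0_eq_abs, abs_div, abs_of_pos hρ, one_le_div hρ]
  rw [cutoff, unitBump.zero_of_le_dist h, ofReal_zero]

lemma dbar_cutoff (hρ : DifferentiableAt ℝ ρ x) (hρ₀ : ρ x ≠ 0) :
    dbar (cutoff ρ) x y =
      1 / 2 * (deriv unitBump (y / ρ x) * (-(y * deriv ρ x) / ρ x ^ 2 : ℝ) +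
        I * (deriv unitBump (y / ρ x) * (1 / ρ x : ℝ))) := by
  have hφ : HasDerivAt unitBump (deriv unitBump (y / ρ x)) (y / ρ x) :=
    ((unitBump.contDiff (n := 1)).differentiable one_ne_zero _).hasDerivAt
  have hx : HasDerivAt (fun s => y / ρ s) (-(y * deriv ρ x) / ρ x ^ 2) x := by
    simpa using (hasDerivAt_const x y).fun_div hρ.hasDerivAt hρ₀
  have hy : HasDerivAt (fun s => s / ρ x) (1 / ρ x) y := (hasDerivAt_id y).div_const _
  have hφx := (HasDerivAt.comp (h₂ := unitBump) x hφ hx).ofReal_comp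
  have hφy := (HasDerivAt.comp (h₂ := unitBump) y hφ hy).ofReal_comp
  simpa only [ofReal_mul, smul_eq_mul] using dbar_eq_of_hasDerivAt (g := cutoff ρ) hφx hφy

lemma abs_mem_Ioo_of_dbar_cutoff_ne_zero (hρ : DifferentiableAt ℝ ρ x) (hρ₀ : 0 < ρ x)
    (h : dbar (cutoff ρ) x y ≠ 0) : |y| ∈ Set.Ioo (ρ x / 2) (ρ x) := by
  have hφ : deriv unitBump (y / ρ x) ≠ 0 := by
    intro hφ
    simp [dbar_cutoff hρ hρ₀.ne', hφ] at h
  obtain ⟨hin, hout⟩ : 1 / 2 < |y| / ρ x ∧ |y| / ρ x < 1 := by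
    simpa [abs_div, abs_of_pos hρ₀, unitBump] using dist_mem_Ioo_of_deriv_contDiffBump_ne_zero hφ
  rw [lt_div_iff₀ hρ₀] at hin
  rw [div_lt_one hρ₀] at hout
  exact ⟨by linarith, hout⟩

lemma norm_dbar_cutoff_le {L M : ℝ} (hρ : DifferentiableAt ℝ ρ x) (hρ₀ : 0 < ρ x)
    (hL : |deriv ρ x| ≤ L) (hM : ∀ t, |deriv unitBump t| ≤ M) (hy : |y| ≤ ρ x) :
    ‖dbar (cutoff ρ) x y‖ ≤ (1 + L) * M / (2 * ρ x) := by
  have hM₀ : 0 ≤ M := (abs_nonneg _).trans (hM 0)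
  have hdx : |-(y * deriv ρ x) / ρ x ^ 2| ≤ L / ρ x :=
    calc |-(y * deriv ρ x) / ρ x ^ 2| = |y| * |deriv ρ x| / ρ x ^ 2 := by
          rw [abs_div, abs_neg, abs_mul, abs_of_pos (pow_pos hρ₀ 2)]
      _ ≤ ρ x * L / ρ x ^ 2 := by gcongr
      _ = L / ρ x := by field_simp
  rw [dbar_cutoff hρ hρ₀.ne', norm_mul]
  calc ‖(1 / 2 : ℂ)‖ * ‖(deriv unitBump (y / ρ x) * (-(y * deriv ρ x) / ρ x ^ 2 : ℝ) +
          I * (deriv unitBump (y / ρ x) * (1 / ρ x : ℝ)) : ℂ)‖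
      ≤ 1 / 2 * (|deriv unitBump (y / ρ x)| * |-(y * deriv ρ x) / ρ x ^ 2| +
          |deriv unitBump (y / ρ x)| * |1 / ρ x|) := by
        gcongr
        · norm_num
        · refine (norm_add_le _ _).trans_eq ?_
          simp only [norm_mul, norm_I, one_mul, norm_real, Real.norm_eq_abs]
    _ ≤ 1 / 2 * (M * (L / ρ x) + M * (1 / ρ x)) := by
        rw [abs_of_pos (one_div_pos.mpr hρ₀)]
        gcongr
        exacts [hM _, hM _]
    _ = (1 + L) * M / (2 * ρ x) := by
        field_simp
        ring

end Cutoff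

section QuasiAnalyticExtension

variable {E : Type*} [NormedAddCommGroup E] [NormedSpace ℂ E] {f : ℝ → E} {n : ℕ}
  {ρ : ℝ → ℝ} {x y : ℝ}

/-- The quasi-analytic extension of `f` of order `n` at the length scale `ρ`: the formal Taylor
extension cut off to `|y| < ρ(x)`. -/
noncomputable def quasiAnalyticExtension (ρ : ℝ → ℝ) (n : ℕ) (f : ℝ → E) (p : ℝ × ℝ) : E :=
  cutoff ρ p • taylorExtension n f p

lemma dbar_quasiAnalyticExtension (hρ : ContDiff ℝ 1 ρ) (hρ₀ : ∀ x, ρ x ≠ 0)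
    (hf : ContDiff ℝ n f) (x y : ℝ) :
    dbar (quasiAnalyticExtension ρ n f) x y =
      cutoff ρ (x, y) • dbar (taylorExtension n f) x y +
        dbar (cutoff ρ) x y • taylorExtension n f (x, y) :=
  dbar_smul ((contDiff_cutoff hρ hρ₀).differentiable one_ne_zero _)
    ((contDiff_taylorExtension hf).differentiable one_ne_zero _)

lemma dbar_quasiAnalyticExtension_eq_zero (hρ : ContDiff ℝ 1 ρ) (hρ₀ : ∀ x, 0 < ρ x)
    (hf : ContDiff ℝ n f) (hy : ρ x ≤ |y|) : dbar (quasiAnalyticExtension ρ n f) x y = 0 := by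
  have hχ : dbar (cutoff ρ) x y = 0 := by
    by_contra h
    exact hy.not_gt
      (abs_mem_Ioo_of_dbar_cutoff_ne_zero (hρ.differentiable one_ne_zero x) (hρ₀ x) h).2
  rw [dbar_quasiAnalyticExtension hρ (fun x => (hρ₀ x).ne') hf, cutoff_eq_zero (hρ₀ x) hy, hχ,
    zero_smul, zero_smul, add_zero]

lemma norm_dbar_cutoff_smul_taylorExtension_le {L M : ℝ} (hρ : DifferentiableAt ℝ ρ x)
    (hρ₀ : 0 < ρ x) (hL : |deriv ρ x| ≤ L) (hM : ∀ t, |deriv unitBump t| ≤ M)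
    (n : ℕ) (f : ℝ → E) :
    ‖dbar (cutoff ρ) x y • taylorExtension (n + 1) f (x, y)‖ ≤
      2 ^ n * ((1 + L) * M) / 2 * jetWeight ρ (n + 1) f x * |y| ^ n := by
  have hL₀ : 0 ≤ L := (abs_nonneg _).trans hL
  have hM₀ : 0 ≤ M := (abs_nonneg _).trans (hM 0)
  have hW : 0 ≤ jetWeight ρ (n + 1) f x :=
    (norm_nonneg _).trans (norm_iteratedDeriv_le_jetWeight (n + 1) f hρ₀.le)
  by_cases h : dbar (cutoff ρ) x y = 0
  · rw [h, zero_smul, norm_zero]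
    positivity
  obtain ⟨hlow, hup⟩ := abs_mem_Ioo_of_dbar_cutoff_ne_zero hρ hρ₀ h
  rw [norm_smul]
  calc ‖dbar (cutoff ρ) x y‖ * ‖taylorExtension (n + 1) f (x, y)‖
      ≤ (1 + L) * M / (2 * ρ x) * (ρ x ^ (n + 1) * jetWeight ρ (n + 1) f x) := by
        gcongr
        · exact norm_dbar_cutoff_le hρ hρ₀ hL hM hup.le
        · exact norm_taylorExtension_le (n + 1) f hρ₀ hup.le
    _ = (1 + L) * M / 2 * jetWeight ρ (n + 1) f x * ρ x ^ n := by
        field_simp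
        ring
    _ ≤ (1 + L) * M / 2 * jetWeight ρ (n + 1) f x * (2 * |y|) ^ n := by
        gcongr
        linarith
    _ = 2 ^ n * ((1 + L) * M) / 2 * jetWeight ρ (n + 1) f x * |y| ^ n := by
        ring

lemma norm_dbar_quasiAnalyticExtension_le {L M : ℝ} (hρ : ContDiff ℝ 1 ρ) (hρ₀ : ∀ x, 0 < ρ x)
    (hL : |deriv ρ x| ≤ L) (hM : ∀ t, |deriv unitBump t| ≤ M) (hf : ContDiff ℝ (n + 1 : ℕ) f) :
    ‖dbar (quasiAnalyticExtension ρ (n + 1) f) x y‖ ≤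
      (1 + 2 ^ n * ((1 + L) * M)) / 2 * jetWeight ρ (n + 1) f x * |y| ^ n := by
  have htaylor : ‖cutoff ρ (x, y) • dbar (taylorExtension (n + 1) f) x y‖ ≤
      1 / 2 * jetWeight ρ (n + 1) f x * |y| ^ n := by
    rw [norm_smul]
    exact (mul_le_of_le_one_left (norm_nonneg _) (norm_cutoff_le_one ρ _)).trans
      (norm_dbar_taylorExtension_le hf (hρ₀ x).le)
  have hcutoff := norm_dbar_cutoff_smul_taylorExtension_le (y := y)
    (hρ.differentiable one_ne_zero x) (hρ₀ x) hL hM n f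
  rw [dbar_quasiAnalyticExtension hρ (fun x => (hρ₀ x).ne') hf]
  linarith [norm_add_le_of_le htaylor hcutoff]

theorem quasi_analytic_extension_general (E : Type*) [NormedAddCommGroup E] [NormedSpace ℂ E]
    (n : ℕ) (hn : n ≠ 0) (L : ℝ) :
    ∃ C : ℝ, ∀ ρ : ℝ → ℝ, ContDiff ℝ 1 ρ → (∀ x, 0 < ρ x) → (∀ x, |deriv ρ x| ≤ L) →
      ∀ f : ℝ → E, ContDiff ℝ n f →
        ∃ ft : ℝ × ℝ → E, ContDiff ℝ 1 ft ∧
          (∀ x, ft (x, 0) = f x) ∧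
          (∀ x y, ρ x ≤ |y| → ft (x, y) = 0) ∧
          (∀ x y, ‖dbar ft x y‖ ≤ C * jetWeight ρ n f x * |y| ^ (n - 1)) ∧
          (∀ x y, ρ x ≤ |y| → dbar ft x y = 0) := by
  obtain ⟨m, rfl⟩ := Nat.exists_eq_succ_of_ne_zero hn
  obtain ⟨M, hM⟩ := exists_abs_deriv_contDiffBump_le unitBump
  refine ⟨(1 + 2 ^ m * ((1 + L) * M)) / 2, fun ρ hρ hρ₀ hL f hf =>
    ⟨quasiAnalyticExtension ρ (m + 1) f, ?_, fun x => ?_, fun x y hy => ?_, fun x y => ?_,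
      fun x y hy => dbar_quasiAnalyticExtension_eq_zero hρ hρ₀ hf hy⟩⟩
  · exact (contDiff_cutoff hρ fun x => (hρ₀ x).ne').smul (contDiff_taylorExtension hf)
  · rw [quasiAnalyticExtension, cutoff_zero_right, one_smul, taylorExtension_zero_right hn]
  · rw [quasiAnalyticExtension, cutoff_eq_zero (hρ₀ x) hy, zero_smul]
  · exact norm_dbar_quasiAnalyticExtension_le hρ hρ₀ (hL x) hM hf

end QuasiAnalyticExtension

section JapaneseBracket

lemma contDiff_sqrt_one_add_sq {k : WithTop ℕ∞} : ContDiff ℝ k fun x : ℝ => √(1 + x ^ 2) :=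
  ContDiff.sqrt (by fun_prop) fun x => by positivity

lemma abs_deriv_sqrt_one_add_sq_le_one (x : ℝ) : |deriv (fun x : ℝ => √(1 + x ^ 2)) x| ≤ 1 := by
  have h : HasDerivAt (fun x : ℝ => √(1 + x ^ 2)) (x / √(1 + x ^ 2)) x := by
    convert ((hasDerivAt_pow 2 x).const_add 1).sqrt (by positivity) using 1
    field_simp
    ring
  rw [h.deriv, abs_div, abs_of_nonneg (Real.sqrt_nonneg _)]
  exact div_le_one_of_le₀ (Real.abs_le_sqrt (by linarith)) (Real.sqrt_nonneg _)

lemma jetWeight_ofReal_comp {n : ℕ} {f : ℝ → ℝ} (hf : ContDiff ℝ n f) (x : ℝ) :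
    jetWeight (fun x => √(1 + x ^ 2)) n (fun x => (f x : ℂ)) x = Fweight n f x := by
  refine sum_congr rfl fun l hl => ?_
  have hl : (l : WithTop ℕ∞) ≤ n := by exact_mod_cast mem_range_succ_iff.mp hl
  rw [← norm_iteratedFDeriv_eq_norm_iteratedDeriv, ← Real.norm_eq_abs,
    ← norm_iteratedFDeriv_eq_norm_iteratedDeriv,
    ← ofRealLI.norm_iteratedFDeriv_comp_left hf.contDiffAt hl]
  rfl

end JapaneseBracket

/-- Every `f ∈ Cⁿ(ℝ)`, `n ≥ 2`, admits a quasi-analytic extension `f̃ ∈ C¹(ℝ²;ℂ)` with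
`f̃(x,0) = f(x)`, `f̃(x,y) = 0` for `|y| > ⟨x⟩`, and
`|𝒵(x,y)| ≤ C F(x) |y|^{n−1}` for `|y| < ⟨x⟩` (and `𝒵 = 0` for `|y| > ⟨x⟩`),
where `C` depends only on `n`. -/
theorem quasi_analytic_extension (n : ℕ) (hn : 2 ≤ n) :
    ∃ C : ℝ, ∀ f : ℝ → ℝ, ContDiff ℝ n f →
      ∃ ft : ℝ × ℝ → ℂ, ContDiff ℝ 1 ft ∧
        (∀ x : ℝ, ft (x, 0) = (f x : ℂ)) ∧
        (∀ x y : ℝ, Real.sqrt (1 + x ^ 2) < |y| → ft (x, y) = 0) ∧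
        (∀ x y : ℝ, |y| < Real.sqrt (1 + x ^ 2) →
          ‖CRderiv ft x y‖ ≤ C * Fweight n f x * |y| ^ (n - 1)) ∧
        (∀ x y : ℝ, Real.sqrt (1 + x ^ 2) < |y| → CRderiv ft x y = 0) := by
  obtain ⟨C, hC⟩ := quasi_analytic_extension_general ℂ n (by omega) 1
  refine ⟨C, fun f hf => ?_⟩
  obtain ⟨ft, hft, hreal, hsupp, hbound, hzero⟩ := hC _ contDiff_sqrt_one_add_sq
    (fun x => by positivity) abs_deriv_sqrt_one_add_sq_le_one _ (ofRealCLM.contDiff.comp hf)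
  simp only [CRderiv_eq_dbar, ← jetWeight_ofReal_comp hf]
  exact ⟨ft, hft, hreal, fun x y hy => hsupp x y hy.le, fun x y _ => hbound x y,
    fun x y hy => hzero x y hy.le⟩
end

section
/- Let d ≥ 2. There is a constant C, depending only on d, with the following property. Let ρ > 0, let Ψ be a C² function on the closure of the cube C_ρ^{(d−1)} = (−2ρ,2ρ)^{d−1} with values in (−2ρ,2ρ), and fix l ∈ {1,…,d}. Then ∫_{C_ρ^{(d−1)}} m(ξ°) dξ° ≤ C · ρ^{d−2} · (1 + ρ·‖∇²Ψ‖_{L^∞}), where the integral is over Lebesgue measure on the (d−1)-dimensional cube; in particular m(ξ°) < ∞ (and hence X_l(ξ°) is finite) for Lebesgue-almost every ξ°. -/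
open MeasureTheory Set
open scoped Classical

/-- The open cube `(−2ρ, 2ρ)^n`. -/
def cube (n : ℕ) (ρ : ℝ) : Set (Fin n → ℝ) :=
  Set.univ.pi fun _ => Set.Ioo (-(2 * ρ)) (2 * ρ)

/-- The graph surface `S = {ξ ∈ (−2ρ,2ρ)^{n+1} : ξ_d = Ψ(ξ̂)}` of `Ψ`. -/
def graphSurface (n : ℕ) (ρ : ℝ) (Ψ : (Fin n → ℝ) → ℝ) : Set (Fin (n + 1) → ℝ) :=
  {ξ | (∀ i, ξ i ∈ Set.Ioo (-(2 * ρ)) (2 * ρ)) ∧ ξ (Fin.last n) = Ψ (Fin.init ξ)}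

/-- `X_l(ξ°) = {t ∈ (−2ρ,2ρ) : the point with `t` inserted as `l`-th coordinate of `ξ°`
lies on the surface `S`}`. -/
def Xset (n : ℕ) (ρ : ℝ) (Ψ : (Fin n → ℝ) → ℝ) (l : Fin (n + 1)) (ξ : Fin n → ℝ) :
    Set ℝ :=
  {t | t ∈ Set.Ioo (-(2 * ρ)) (2 * ρ) ∧ l.insertNth t ξ ∈ graphSurface n ρ Ψ}

/-- The function `m(ξ°)`: `(4ρ)⁻¹` if `X` is empty or a singleton, `Σ_j ρ_j⁻¹` with
`ρ_j = dist(ξ^{(j)}, X∖{ξ^{(j)}})` if `X` is finite with at least two points, and `+∞`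
if `X` is infinite. -/
noncomputable def mval (ρ : ℝ) (X : Set ℝ) : ENNReal :=
  if X.Subsingleton then (ENNReal.ofReal (4 * ρ))⁻¹
  else if X.Finite then
    ∑' x : X, (ENNReal.ofReal (Metric.infDist (x : ℝ) (X \ {(x : ℝ)})))⁻¹
  else ⊤

open Function
open scoped ENNReal NNReal

/-!
For `l` other than the last index, `X_l(ξ°)` is the fiber above `ξ°` of the map from the cube to
`ℝⁿ` that lifts `x` to the graph of `Ψ` and forgets the `l`-th coordinate; its Jacobian is
`|∂_l Ψ|`. Between two points of one fiber `∂_l Ψ` vanishes by Rolle's theorem, so at each point of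
the fiber `|∂_l Ψ|` is at most `‖∇²Ψ‖` times the distance to the nearest other point. Therefore
`m ≤ (4ρ)⁻¹ + ‖∇²Ψ‖ ∑ |∂_l Ψ|⁻¹`, the sum being over the fiber, and by the area formula the
integral of that sum is at most the volume of the cube. For the last index the fibers have at most
one point.
-/

section AreaFormula

variable {α β : Type*} {f : α → β} {g : α → ℝ≥0∞} {s : Set α}

/-- The sum of the weight `g` over the points of `s` in the fiber of `f` above `y`, that is, the
multiplicity integrand on the left-hand side of the area formula. -/
noncomputable def fiberSum (s : Set α) (f : α → β) (g : α → ℝ≥0∞) (y : β) : ℝ≥0∞ :=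
  ∑' x : ↥(s ∩ f ⁻¹' {y}), g x

lemma fiberSum_apply_of_injOn (hf : InjOn f s) {x : α} (hx : x ∈ s) :
    fiberSum s f g (f x) = g x := by
  have hfib : s ∩ f ⁻¹' {f x} = {x} :=
    Subset.antisymm (fun z hz ↦ hf hz.1 hx hz.2) (singleton_subset_iff.2 ⟨hx, rfl⟩)
  rw [fiberSum, hfib, tsum_singleton]

lemma fiberSum_eq_zero_of_notMem_image {y : β} (hy : y ∉ f '' s) : fiberSum s f g y = 0 := by
  have : IsEmpty ↥(s ∩ f ⁻¹' {y}) := ⟨fun x ↦ hy ⟨x, x.2⟩⟩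
  exact tsum_empty

lemma fiberSum_iUnion {ι : Type*} {t : ι → Set α} (ht : Pairwise (Disjoint on t)) (y : β) :
    fiberSum (⋃ i, t i) f g y = ∑' i, fiberSum (t i) f g y := by
  rw [fiberSum, iUnion_inter]
  exact ENNReal.tsum_biUnion fun i _ j _ hij ↦
    (ht hij).mono inter_subset_left inter_subset_left

lemma fiberSum_congr_set {t : Set α} {y : β} (h : ∀ x, f x = y → (x ∈ s ↔ x ∈ t)) :
    fiberSum s f g y = fiberSum t f g y := by
  have hfib : s ∩ f ⁻¹' {y} = t ∩ f ⁻¹' {y} := by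
    ext x
    exact and_congr_left (h x)
  rw [fiberSum, fiberSum, hfib]

variable {E : Type*} [NormedAddCommGroup E] [NormedSpace ℝ E]

lemma measurableSet_det_ne_zero {Ω : Type*} [MeasurableSpace Ω] {A : Ω → E →L[ℝ] E}
    (hA : Measurable A) : MeasurableSet {ω | (A ω).det ≠ 0} :=
  (ContinuousLinearMap.continuous_det.measurable.comp hA) (measurableSet_singleton 0).compl

lemma measurable_abs_det_inv {Ω : Type*} [MeasurableSpace Ω] {A : Ω → E →L[ℝ] E}
    (hA : Measurable A) : Measurable fun ω ↦ (ENNReal.ofReal |(A ω).det|)⁻¹ :=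
  (continuous_abs.measurable.comp
    (ContinuousLinearMap.continuous_det.measurable.comp hA)).ennreal_ofReal.inv

variable [FiniteDimensional ℝ E]

lemma exists_approximatesLinearOn_injOn (A : E →L[ℝ] E) :
    ∃ r : ℝ≥0, r ≠ 0 ∧
      (A.det ≠ 0 → ∀ (f : E → E) (s : Set E), ApproximatesLinearOn f A s r → InjOn f s) := by
  by_cases hA : A.det = 0
  · exact ⟨1, one_ne_zero, fun h ↦ absurd hA h⟩
  let e := A.toContinuousLinearEquivOfDetNeZero hA
  rcases subsingleton_or_nontrivial E with _ | _
  · exact ⟨1, one_ne_zero, fun _ _ _ _ ↦ injOn_of_subsingleton _ _⟩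
  have hpos : 0 < ‖(e.symm : E →L[ℝ] E)‖₊⁻¹ := inv_pos.2 e.nnnorm_symm_pos
  refine ⟨‖(e.symm : E →L[ℝ] E)‖₊⁻¹ / 2, (half_pos hpos).ne', fun _ f s hf ↦ ?_⟩
  exact ApproximatesLinearOn.injOn (f' := e) hf (Or.inr (NNReal.half_lt_self hpos.ne'))

variable [MeasurableSpace E] [BorelSpace E] {μ : Measure E} [μ.IsAddHaarMeasure]
  {f : E → E} {f' : E → E →L[ℝ] E} {g : E → ℝ≥0∞} {s : Set E}

lemma exists_measurable_partition_injOn (hs : MeasurableSet s)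
    (hf' : ∀ x ∈ s, HasFDerivWithinAt f (f' x) s x) (hdet : ∀ x ∈ s, (f' x).det ≠ 0) :
    ∃ t : ℕ → Set E, Pairwise (Disjoint on t) ∧ (∀ i, MeasurableSet (t i)) ∧ ⋃ i, t i = s ∧
      ∀ i, InjOn f (t i) := by
  choose r hr hinj using exists_approximatesLinearOn_injOn (E := E)
  obtain ⟨t, A, ht_disj, ht_meas, ht_cover, ht_approx, hA⟩ :=
    exists_partition_approximatesLinearOn_of_hasFDerivWithinAt f s f' hf' r hr
  refine ⟨fun i ↦ s ∩ t i,
    fun i j hij ↦ (ht_disj hij).mono inter_subset_right inter_subset_right,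
    fun i ↦ hs.inter (ht_meas i), ?_, fun i ↦ ?_⟩
  · rw [← inter_iUnion, inter_eq_left.2 ht_cover]
  · rcases s.eq_empty_or_nonempty with rfl | hne
    · simp only [empty_inter, injOn_empty]
    · obtain ⟨y, hy, hAy⟩ := hA hne i
      exact hinj (A i) (hAy ▸ hdet y hy) f _ (ht_approx i)

lemma measurable_fiberSum_of_injOn (hs : MeasurableSet s)
    (hf' : ∀ x ∈ s, HasFDerivWithinAt f (f' x) s x) (hf : InjOn f s) (hg : Measurable g) :
    Measurable (fiberSum s f g) := by
  have hemb := measurableEmbedding_of_fderivWithin hs hf' hf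
  have hext : fiberSum s f g = extend (s.domRestrict f) (fun x ↦ g x) fun _ ↦ 0 := by
    ext y
    by_cases hy : y ∈ f '' s
    · obtain ⟨x, hx, rfl⟩ := hy
      rw [fiberSum_apply_of_injOn hf hx]
      exact (hemb.injective.extend_apply (fun x ↦ g x) _ ⟨x, hx⟩).symm
    · rw [fiberSum_eq_zero_of_notMem_image hy, extend_apply']
      rintro ⟨x, hx⟩
      exact hy ⟨x, x.2, hx⟩
  rw [hext]
  exact hemb.measurable_extend (hg.comp measurable_subtype_coe) measurable_const

lemma lintegral_fiberSum_of_injOn (hs : MeasurableSet s)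
    (hf' : ∀ x ∈ s, HasFDerivWithinAt f (f' x) s x) (hf : InjOn f s) :
    ∫⁻ y, fiberSum s f g y ∂μ = ∫⁻ x in s, ENNReal.ofReal |(f' x).det| * g x ∂μ := by
  have hsupp : support (fiberSum s f g) ⊆ f '' s := fun y hy ↦ by
    by_contra hys
    exact hy (fiberSum_eq_zero_of_notMem_image hys)
  rw [← setLIntegral_eq_of_support_subset hsupp,
    lintegral_image_eq_lintegral_abs_det_fderiv_mul μ hs hf' hf]
  refine setLIntegral_congr_fun hs fun x hx ↦ ?_
  simp only [fiberSum_apply_of_injOn hf hx]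

lemma measurable_fiberSum_of_det_ne_zero (hs : MeasurableSet s)
    (hf' : ∀ x ∈ s, HasFDerivWithinAt f (f' x) s x) (hdet : ∀ x ∈ s, (f' x).det ≠ 0)
    (hg : Measurable g) : Measurable (fiberSum s f g) := by
  obtain ⟨t, ht_disj, ht_meas, rfl, ht_inj⟩ := exists_measurable_partition_injOn hs hf' hdet
  have ht' (i : ℕ) : ∀ x ∈ t i, HasFDerivWithinAt f (f' x) (t i) x := fun x hx ↦
    (hf' x (mem_iUnion_of_mem i hx)).mono (subset_iUnion t i)
  rw [funext (fiberSum_iUnion ht_disj)]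
  exact Measurable.tsum fun i ↦ measurable_fiberSum_of_injOn (ht_meas i) (ht' i) (ht_inj i) hg

lemma lintegral_fiberSum_of_det_ne_zero (hs : MeasurableSet s)
    (hf' : ∀ x ∈ s, HasFDerivWithinAt f (f' x) s x) (hdet : ∀ x ∈ s, (f' x).det ≠ 0)
    (hg : Measurable g) :
    ∫⁻ y, fiberSum s f g y ∂μ = ∫⁻ x in s, ENNReal.ofReal |(f' x).det| * g x ∂μ := by
  obtain ⟨t, ht_disj, ht_meas, rfl, ht_inj⟩ := exists_measurable_partition_injOn hs hf' hdet
  have ht' (i : ℕ) : ∀ x ∈ t i, HasFDerivWithinAt f (f' x) (t i) x := fun x hx ↦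
    (hf' x (mem_iUnion_of_mem i hx)).mono (subset_iUnion t i)
  calc ∫⁻ y, fiberSum (⋃ i, t i) f g y ∂μ
      = ∫⁻ y, ∑' i, fiberSum (t i) f g y ∂μ := by simp only [fiberSum_iUnion ht_disj]
    _ = ∑' i, ∫⁻ y, fiberSum (t i) f g y ∂μ := lintegral_tsum fun i ↦
        (measurable_fiberSum_of_injOn (ht_meas i) (ht' i) (ht_inj i) hg).aemeasurable
    _ = ∑' i, ∫⁻ x in t i, ENNReal.ofReal |(f' x).det| * g x ∂μ :=
        tsum_congr fun i ↦ lintegral_fiberSum_of_injOn (ht_meas i) (ht' i) (ht_inj i)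
    _ = ∫⁻ x in ⋃ i, t i, ENNReal.ofReal |(f' x).det| * g x ∂μ :=
        (lintegral_iUnion ht_meas ht_disj _).symm

lemma fiberSum_ae_eq_fiberSum_det_ne_zero (hf' : ∀ x ∈ s, HasFDerivWithinAt f (f' x) s x) :
    fiberSum s f g =ᵐ[μ] fiberSum (s ∩ {x | (f' x).det ≠ 0}) f g := by
  have hnull : μ (f '' (s ∩ {x | (f' x).det = 0})) = 0 :=
    addHaar_image_eq_zero_of_det_fderivWithin_eq_zero μ
      (fun x hx ↦ (hf' x hx.1).mono inter_subset_left) fun x hx ↦ hx.2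
  filter_upwards [measure_eq_zero_iff_ae_notMem.1 hnull] with y hy
  exact fiberSum_congr_set fun x hxy ↦
    ⟨fun hx ↦ ⟨hx, fun h0 ↦ hy ⟨x, ⟨hx, h0⟩, hxy⟩⟩, fun hx ↦ hx.1⟩

lemma aemeasurable_fiberSum (hs : MeasurableSet s) (hf'm : Measurable f')
    (hf' : ∀ x ∈ s, HasFDerivWithinAt f (f' x) s x) (hg : Measurable g) :
    AEMeasurable (fiberSum s f g) μ :=
  ⟨_, measurable_fiberSum_of_det_ne_zero (hs.inter (measurableSet_det_ne_zero hf'm))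
    (fun x hx ↦ (hf' x hx.1).mono inter_subset_left) (fun _ hx ↦ hx.2) hg,
    fiberSum_ae_eq_fiberSum_det_ne_zero hf'⟩

theorem lintegral_fiberSum (hs : MeasurableSet s) (hf'm : Measurable f')
    (hf' : ∀ x ∈ s, HasFDerivWithinAt f (f' x) s x) (hg : Measurable g) :
    ∫⁻ y, fiberSum s f g y ∂μ = ∫⁻ x in s, ENNReal.ofReal |(f' x).det| * g x ∂μ := by
  have hm := measurableSet_det_ne_zero hf'm
  rw [lintegral_congr_ae (fiberSum_ae_eq_fiberSum_det_ne_zero hf'),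
    lintegral_fiberSum_of_det_ne_zero (hs.inter hm)
      (fun x hx ↦ (hf' x hx.1).mono inter_subset_left) (fun _ hx ↦ hx.2) hg,
    ← lintegral_inter_add_sdiff _ s hm]
  have hcrit : ∫⁻ x in s \ {x | (f' x).det ≠ 0}, ENNReal.ofReal |(f' x).det| * g x ∂μ = 0 := by
    refine (setLIntegral_congr_fun (hs.diff hm) fun x hx ↦ ?_).trans lintegral_zero
    have h0 : (f' x).det = 0 := not_not.1 hx.2
    simp only [h0, abs_zero, ENNReal.ofReal_zero, zero_mul]
  rw [hcrit, add_zero]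

lemma lintegral_fiberSum_abs_det_inv_le (hs : MeasurableSet s) (hf'm : Measurable f')
    (hf' : ∀ x ∈ s, HasFDerivWithinAt f (f' x) s x) :
    ∫⁻ y, fiberSum s f (fun x ↦ (ENNReal.ofReal |(f' x).det|)⁻¹) y ∂μ ≤ μ s :=
  calc ∫⁻ y, fiberSum s f (fun x ↦ (ENNReal.ofReal |(f' x).det|)⁻¹) y ∂μ
      = ∫⁻ x in s, ENNReal.ofReal |(f' x).det| * (ENNReal.ofReal |(f' x).det|)⁻¹ ∂μ :=
        lintegral_fiberSum hs hf'm hf' (measurable_abs_det_inv hf'm)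
    _ ≤ ∫⁻ _ in s, 1 ∂μ := lintegral_mono fun _ ↦ ENNReal.mul_inv_le_one _
    _ = μ s := setLIntegral_one s

end AreaFormula

section Separation

lemma finite_of_tsum_inv_ne_top {α : Type*} {X : Set α} {w : α → ℝ≥0∞} {B : ℝ≥0∞} (hB : B ≠ ∞)
    (hw : ∀ x ∈ X, w x ≤ B) (hsum : ∑' x : X, (w x)⁻¹ ≠ ∞) : X.Finite := by
  have hfin := ENNReal.finite_const_le_of_tsum_ne_top hsum (ENNReal.inv_ne_zero.2 hB)
  rw [← finite_coe_iff, ← finite_univ_iff]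
  exact hfin.subset fun x _ ↦ ENNReal.inv_le_inv.2 (hw x x.2)

lemma inv_le_mul_inv_of_le_mul {w K D : ℝ≥0∞} (h0 : w ≠ 0) (htop : w ≠ ∞) (h : w ≤ K * D) :
    D⁻¹ ≤ K * w⁻¹ :=
  calc D⁻¹ = w / D * w⁻¹ := by
        rw [div_eq_mul_inv, mul_right_comm, ENNReal.mul_inv_cancel h0 htop, one_mul]
    _ ≤ K * w⁻¹ := by gcongr; exact ENNReal.div_le_of_le_mul h

lemma mval_le_of_le_mul_edist {X : Set ℝ} (hX : Bornology.IsBounded X) {w : ℝ → ℝ≥0∞} {K : ℝ≥0}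
    (hw : ∀ x ∈ X, ∀ y ∈ X, x ≠ y → w x ≤ K * edist x y)
    (hsum : ∑' x : X, (w x)⁻¹ ≠ ∞) (ρ : ℝ) :
    mval ρ X ≤ (ENNReal.ofReal (4 * ρ))⁻¹ + K * ∑' x : X, (w x)⁻¹ := by
  by_cases hsub : X.Subsingleton
  · rw [mval, if_pos hsub]
    exact le_self_add
  have hother (x : ℝ) : (X \ {x}).Nonempty := (not_subsingleton_iff.1 hsub).exists_ne x
  have htop : K * Metric.ediam X ≠ ∞ := ENNReal.mul_ne_top ENNReal.coe_ne_top hX.ediam_ne_top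
  have hw_le : ∀ x ∈ X, w x ≤ K * Metric.ediam X := fun x hx ↦ by
    obtain ⟨y, hy, hyx⟩ := hother x
    exact (hw x hx y hy (Ne.symm hyx)).trans (by gcongr; exact Metric.edist_le_ediam_of_mem hx hy)
  have hfin : X.Finite := finite_of_tsum_inv_ne_top htop hw_le hsum
  rw [mval, if_neg hsub, if_pos hfin]
  refine le_add_left ?_
  rw [← ENNReal.tsum_mul_left]
  refine ENNReal.tsum_le_tsum fun ⟨x, hx⟩ ↦ ?_
  obtain ⟨y, hy, hdist⟩ :=
    (hfin.subset sdiff_subset).isCompact.exists_infDist_eq_dist (hother x) x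
  rw [hdist, ← edist_dist]
  have hw_ne_zero : w x ≠ 0 :=
    ENNReal.inv_ne_top.1 (ENNReal.ne_top_of_tsum_ne_top hsum ⟨x, hx⟩)
  exact inv_le_mul_inv_of_le_mul hw_ne_zero (ne_top_of_le_ne_top htop (hw_le x hx))
    (hw x hx y hy.1 (Ne.symm hy.2))

end Separation

section Rolle

variable {E : Type*} [NormedAddCommGroup E] [NormedSpace ℝ E]

/-- By Rolle's theorem `f' z (y - x)` vanishes at some `z` of the segment from `x` to `y`. -/
lemma norm_hasFDerivWithinAt_apply_sub_le_of_eq {f : E → ℝ} {f' : E → E →L[ℝ] ℝ} {s : Set E}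
    {K : ℝ≥0} (hs : Convex ℝ s) (hf : ∀ x ∈ s, HasFDerivWithinAt f (f' x) s x)
    (hK : LipschitzOnWith K f' s) {x y : E} (hx : x ∈ s) (hy : y ∈ s) (hxy : f x = f y) :
    ‖f' x (y - x)‖ ≤ K * ‖y - x‖ * ‖y - x‖ := by
  obtain ⟨z, hz, hfz⟩ := domain_mvt hf hs hx hy
  have hz0 : f' z (y - x) = 0 := by rw [← hfz, hxy, sub_self]
  have hxz : ‖x - z‖ ≤ ‖y - x‖ := by
    rw [norm_sub_rev]
    exact norm_sub_le_of_mem_segment hz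
  calc ‖f' x (y - x)‖ = ‖(f' x - f' z) (y - x)‖ := by
        rw [sub_apply, hz0, sub_zero]
    _ ≤ ‖f' x - f' z‖ * ‖y - x‖ := ContinuousLinearMap.le_opNorm _ _
    _ ≤ K * ‖x - z‖ * ‖y - x‖ := by gcongr; exact hK.norm_sub_le hx (hs.segment_subset hx hy hz)
    _ ≤ K * ‖y - x‖ * ‖y - x‖ := by gcongr

lemma lipschitzOnWith_fderiv_of_norm_iteratedFDerivWithin_closure_le {F : Type*}
    [NormedAddCommGroup F] [NormedSpace ℝ F] {f : E → F} {s : Set E} {K : ℝ≥0} (ho : IsOpen s)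
    (hs : Convex ℝ s) (hf : ContDiffOn ℝ 2 f (closure s))
    (hK : ∀ x ∈ s, ‖iteratedFDerivWithin ℝ 2 f (closure s) x‖ ≤ K) :
    LipschitzOnWith K (fderiv ℝ f) s := by
  have hfx : ∀ x ∈ s, ContDiffAt ℝ 2 f x := fun x hx ↦
    hf.contDiffAt (Filter.mem_of_superset (ho.mem_nhds hx) subset_closure)
  refine hs.lipschitzOnWith_of_nnnorm_fderiv_le (𝕜 := ℝ) (fun x hx ↦ ?_) fun x hx ↦ ?_
  · have hderiv : ContDiffAt ℝ 1 (fderiv ℝ f) x := (hfx x hx).fderiv_right (by norm_num)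
    exact hderiv.differentiableAt one_ne_zero
  · have hunique : UniqueDiffOn ℝ (closure s) := uniqueDiffOn_convex hs.closure
      ⟨x, interior_maximal subset_closure ho hx⟩
    rw [← NNReal.coe_le_coe, coe_nnnorm, ← norm_iteratedFDeriv_one, norm_iteratedFDeriv_fderiv,
      ← iteratedFDerivWithin_eq_iteratedFDeriv hunique (hfx x hx) (subset_closure hx)]
    exact hK x hx

end Rolle

section ProjectedGraph

lemma exists_perm_removeNth_snoc {α : Type*} {n : ℕ} (k : Fin n) :
    ∃ σ : Equiv.Perm (Fin n), ∀ (x : Fin n → α) (a : α),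
      k.castSucc.removeNth (Fin.snoc x a : Fin (n + 1) → α) = update x k a ∘ σ := by
  obtain ⟨m, rfl⟩ : ∃ m, n = m + 1 := Nat.exists_eq_succ_of_ne_zero (Fin.pos k).ne'
  refine ⟨(finSuccEquiv' (Fin.last m)).trans (finSuccEquiv' k).symm, fun x a ↦ ?_⟩
  ext j
  simp only [Fin.removeNth, comp_apply, Equiv.trans_apply]
  induction j using Fin.lastCases with
  | last =>
    rw [finSuccEquiv'_at, finSuccEquiv'_symm_none, update_self,
      Fin.succAbove_ne_last_last (Fin.castSucc_ne_last k), Fin.snoc_last]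
  | cast j =>
    rw [finSuccEquiv'_last_apply_castSucc, finSuccEquiv'_symm_some,
      update_of_ne (Fin.succAbove_ne k j), Fin.castSucc_succAbove_castSucc, Fin.snoc_castSucc]

variable {n : ℕ}

/-- The parametrization `x ↦ (x, Ψ x)` of the graph of `Ψ`, followed by the projection along the
`l`-th coordinate axis; its fibers encode the sets `Xset`. -/
def projGraph (l : Fin (n + 1)) (Ψ : (Fin n → ℝ) → ℝ) (x : Fin n → ℝ) : Fin n → ℝ :=
  l.removeNth (Fin.snoc x (Ψ x) : Fin (n + 1) → ℝ)

/-- The derivative of `projGraph l Ψ` at a point where `Ψ` has derivative `L`. -/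
noncomputable def projGraphDeriv (l : Fin (n + 1)) (L : (Fin n → ℝ) →L[ℝ] ℝ) :
    (Fin n → ℝ) →L[ℝ] (Fin n → ℝ) :=
  ContinuousLinearMap.pi (l.removeNth
    (Fin.snoc (fun i ↦ ContinuousLinearMap.proj i) L : Fin (n + 1) → (Fin n → ℝ) →L[ℝ] ℝ))

lemma hasFDerivAt_projGraph (l : Fin (n + 1)) {Ψ : (Fin n → ℝ) → ℝ} {L : (Fin n → ℝ) →L[ℝ] ℝ}
    {x : Fin n → ℝ} (hΨ : HasFDerivAt Ψ L x) :
    HasFDerivAt (projGraph l Ψ) (projGraphDeriv l L) x := by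
  have hgraph (i : Fin (n + 1)) : HasFDerivAt (fun y ↦ (Fin.snoc y (Ψ y) : Fin (n + 1) → ℝ) i)
      ((Fin.snoc (fun i ↦ ContinuousLinearMap.proj i) L :
        Fin (n + 1) → (Fin n → ℝ) →L[ℝ] ℝ) i) x := by
    induction i using Fin.lastCases with
    | last => simpa only [Fin.snoc_last] using hΨ
    | cast i => simpa only [Fin.snoc_castSucc] using hasFDerivAt_apply i x
  exact hasFDerivAt_pi.2 fun j ↦ hgraph (l.succAbove j)

lemma projGraphDeriv_apply (l : Fin (n + 1)) (L : (Fin n → ℝ) →L[ℝ] ℝ) (v : Fin n → ℝ) :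
    projGraphDeriv l L v = projGraph l L v := by
  ext j
  simp only [projGraphDeriv, projGraph, ContinuousLinearMap.coe_pi', Fin.removeNth]
  induction l.succAbove j using Fin.lastCases with
  | last => simp only [Fin.snoc_last]
  | cast i => simp only [Fin.snoc_castSucc, ContinuousLinearMap.proj_apply]

lemma abs_det_projGraphDeriv (k : Fin n) (L : (Fin n → ℝ) →L[ℝ] ℝ) :
    |(projGraphDeriv k.castSucc L).det| = |L (Pi.single k 1)| := by
  obtain ⟨σ, hσ⟩ := exists_perm_removeNth_snoc (α := ℝ) k
  set w : Fin n → ℝ := fun i ↦ L (Pi.single i 1)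
  have hmat : LinearMap.toMatrix' (projGraphDeriv k.castSucc L : (Fin n → ℝ) →ₗ[ℝ] (Fin n → ℝ)) =
      ((1 : Matrix (Fin n) (Fin n) ℝ).updateRow k w).submatrix σ (Equiv.refl _) := by
    ext j i
    rw [LinearMap.toMatrix'_apply, ContinuousLinearMap.coe_coe, projGraphDeriv_apply, projGraph,
      hσ]
    by_cases hj : σ j = k
    · simp [hj, w]
    · simp [hj, Matrix.updateRow_ne, Matrix.one_apply, Pi.single_apply]
  have hrow : ((1 : Matrix (Fin n) (Fin n) ℝ).updateRow k w).det = w k := by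
    rw [← Matrix.cramer_transpose_apply, Matrix.transpose_one, Matrix.cramer_one,
      Module.End.one_apply]
  rw [ContinuousLinearMap.det, ← LinearMap.det_toMatrix', hmat,
    Matrix.abs_det_submatrix_equiv_equiv, hrow]

end ProjectedGraph

section Slices

variable {n : ℕ} {ρ : ℝ} {Ψ : (Fin n → ℝ) → ℝ} {K : ℝ≥0}

lemma isOpen_cube : IsOpen (cube n ρ) :=
  isOpen_set_pi finite_univ fun _ _ ↦ isOpen_Ioo

lemma convex_cube : Convex ℝ (cube n ρ) :=
  convex_pi fun _ _ ↦ convex_Ioo _ _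

lemma zero_mem_cube (hρ : 0 < ρ) : 0 ∈ cube n ρ := fun _ _ ↦ by
  constructor <;> simp only [Pi.zero_apply] <;> linarith

lemma volume_cube : volume (cube n ρ) = ENNReal.ofReal (4 * ρ) ^ n := by
  rw [cube, Real.volume_pi_Ioo, Finset.prod_const, Finset.card_univ, Fintype.card_fin]
  congr 2
  ring

/-- The first `n` coordinates of the point of `ℝⁿ⁺¹` whose `l`-th coordinate is `t` and whose
remaining coordinates are `ξ`: the point of the base of the graph corresponding to `t ∈ X_l(ξ)`. -/
def basePoint (l : Fin (n + 1)) (ξ : Fin n → ℝ) (t : ℝ) : Fin n → ℝ :=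
  Fin.init (l.insertNth t ξ : Fin (n + 1) → ℝ)

lemma basePoint_castSucc_sub (k : Fin n) (ξ : Fin n → ℝ) (t u : ℝ) :
    basePoint k.castSucc ξ u - basePoint k.castSucc ξ t = (u - t) • Pi.single k 1 := by
  have hline (v : ℝ) : basePoint k.castSucc ξ v = update (basePoint k.castSucc ξ t) k v := by
    rw [basePoint, basePoint, ← Fin.init_update_castSucc, Fin.update_insertNth]
  ext i
  rcases eq_or_ne i k with rfl | hi
  · rw [Pi.sub_apply, hline u, hline t]
    simp
  · rw [Pi.sub_apply, hline u]
    simp [hi]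

variable {l : Fin (n + 1)} {ξ : Fin n → ℝ} {t u : ℝ}

lemma basePoint_mem_cube (ht : t ∈ Xset n ρ Ψ l ξ) : basePoint l ξ t ∈ cube n ρ :=
  fun i _ ↦ ht.2.1 i.castSucc

lemma apply_basePoint (ht : t ∈ Xset n ρ Ψ l ξ) :
    Ψ (basePoint l ξ t) = (l.insertNth t ξ : Fin (n + 1) → ℝ) (Fin.last n) :=
  ht.2.2.symm

lemma projGraph_basePoint (ht : t ∈ Xset n ρ Ψ l ξ) : projGraph l Ψ (basePoint l ξ t) = ξ := by
  rw [projGraph, apply_basePoint ht, basePoint, Fin.snoc_init_self, Fin.removeNth_insertNth]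

lemma injective_basePoint_castSucc (k : Fin n) (ξ : Fin n → ℝ) :
    Injective (basePoint k.castSucc ξ) := fun t u htu ↦ by
  have h := congrFun (basePoint_castSucc_sub k ξ u t) k
  rw [htu, sub_self] at h
  simpa [sub_eq_zero, eq_comm] using h

lemma subsingleton_Xset_last : (Xset n ρ Ψ (Fin.last n) ξ).Subsingleton := by
  have hval : ∀ t ∈ Xset n ρ Ψ (Fin.last n) ξ, t = Ψ ξ := fun t ht ↦ by
    simpa [basePoint, Fin.insertNth_last'] using (apply_basePoint ht).symm
  exact fun t ht u hu ↦ (hval t ht).trans (hval u hu).symm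

lemma apply_basePoint_castSucc_eq {k : Fin n} (ht : t ∈ Xset n ρ Ψ k.castSucc ξ)
    (hu : u ∈ Xset n ρ Ψ k.castSucc ξ) :
    Ψ (basePoint k.castSucc ξ t) = Ψ (basePoint k.castSucc ξ u) := by
  obtain ⟨j, hj⟩ := Fin.exists_succAbove_eq (Fin.castSucc_ne_last k).symm
  rw [apply_basePoint ht, apply_basePoint hu, ← hj, Fin.insertNth_apply_succAbove,
    Fin.insertNth_apply_succAbove]

lemma enorm_fderiv_basePoint_le {k : Fin n} (hΨ : DifferentiableOn ℝ Ψ (cube n ρ))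
    (hK : LipschitzOnWith K (fderiv ℝ Ψ) (cube n ρ)) (ht : t ∈ Xset n ρ Ψ k.castSucc ξ)
    (hu : u ∈ Xset n ρ Ψ k.castSucc ξ) (htu : t ≠ u) :
    ‖fderiv ℝ Ψ (basePoint k.castSucc ξ t) (Pi.single k 1)‖ₑ ≤ K * edist t u := by
  have hdist : 0 < ‖u - t‖ := norm_pos_iff.2 (sub_ne_zero.2 htu.symm)
  have hRolle := norm_hasFDerivWithinAt_apply_sub_le_of_eq convex_cube
    (fun x hx ↦ ((hΨ.differentiableAt (isOpen_cube.mem_nhds hx)).hasFDerivAt).hasFDerivWithinAt)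
    hK (basePoint_mem_cube ht) (basePoint_mem_cube hu) (apply_basePoint_castSucc_eq ht hu)
  rw [basePoint_castSucc_sub, map_smul, norm_smul, norm_smul, Pi.norm_single, norm_one, mul_one,
    mul_comm, mul_le_mul_iff_left₀ hdist, norm_sub_rev, ← dist_eq_norm] at hRolle
  rw [edist_dist, ← ofReal_norm, ← ENNReal.ofReal_coe_nnreal, ← ENNReal.ofReal_mul K.coe_nonneg]
  exact ENNReal.ofReal_le_ofReal hRolle

lemma tsum_Xset_le_fiberSum (k : Fin n) (g : (Fin n → ℝ) → ℝ≥0∞) (ξ : Fin n → ℝ) :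
    ∑' t : Xset n ρ Ψ k.castSucc ξ, g (basePoint k.castSucc ξ t) ≤
      fiberSum (cube n ρ) (projGraph k.castSucc Ψ) g ξ := by
  let φ (t : Xset n ρ Ψ k.castSucc ξ) : ↥(cube n ρ ∩ projGraph k.castSucc Ψ ⁻¹' {ξ}) :=
    ⟨basePoint k.castSucc ξ t, basePoint_mem_cube t.2, projGraph_basePoint t.2⟩
  have hφ : Injective φ := fun t u htu ↦
    Subtype.ext (injective_basePoint_castSucc k ξ (congrArg Subtype.val htu))
  exact ENNReal.tsum_comp_le_tsum_of_injective hφ fun x ↦ g x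

end Slices

section Integration

variable {n : ℕ} {ρ : ℝ} {Ψ : (Fin n → ℝ) → ℝ} {K : ℝ≥0}

lemma ofReal_abs_det_fderiv_projGraph (k : Fin n) {x : Fin n → ℝ} (hΨ : DifferentiableAt ℝ Ψ x) :
    ENNReal.ofReal |(fderiv ℝ (projGraph k.castSucc Ψ) x).det| =
      ‖fderiv ℝ Ψ x (Pi.single k 1)‖ₑ := by
  rw [(hasFDerivAt_projGraph _ hΨ.hasFDerivAt).fderiv, abs_det_projGraphDeriv,
    Real.enorm_eq_ofReal_abs]

lemma mval_Xset_castSucc_le (k : Fin n) (hΨ : DifferentiableOn ℝ Ψ (cube n ρ))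
    (hK : LipschitzOnWith K (fderiv ℝ Ψ) (cube n ρ)) {w : (Fin n → ℝ) → ℝ≥0∞}
    (hw : ∀ x ∈ cube n ρ, w x ≤ ‖fderiv ℝ Ψ x (Pi.single k 1)‖ₑ) {ξ : Fin n → ℝ}
    (hξ : fiberSum (cube n ρ) (projGraph k.castSucc Ψ) (fun x ↦ (w x)⁻¹) ξ ≠ ∞) :
    mval ρ (Xset n ρ Ψ k.castSucc ξ) ≤ (ENNReal.ofReal (4 * ρ))⁻¹ +
      K * fiberSum (cube n ρ) (projGraph k.castSucc Ψ) (fun x ↦ (w x)⁻¹) ξ := by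
  have hle := tsum_Xset_le_fiberSum (ρ := ρ) (Ψ := Ψ) k (fun x ↦ (w x)⁻¹) ξ
  have hbdd : Bornology.IsBounded (Xset n ρ Ψ k.castSucc ξ) :=
    (Metric.isBounded_Ioo _ _).subset fun t ht ↦ ht.1
  have hsep : ∀ t ∈ Xset n ρ Ψ k.castSucc ξ, ∀ u ∈ Xset n ρ Ψ k.castSucc ξ, t ≠ u →
      w (basePoint k.castSucc ξ t) ≤ K * edist t u := fun t ht u hu htu ↦
    (hw _ (basePoint_mem_cube ht)).trans (enorm_fderiv_basePoint_le hΨ hK ht hu htu)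
  refine (mval_le_of_le_mul_edist hbdd hsep (ne_top_of_le_ne_top hξ hle) ρ).trans ?_
  gcongr

lemma exists_mval_Xset_le (hΨ : DifferentiableOn ℝ Ψ (cube n ρ))
    (hK : LipschitzOnWith K (fderiv ℝ Ψ) (cube n ρ)) (l : Fin (n + 1)) :
    ∃ G : (Fin n → ℝ) → ℝ≥0∞, AEMeasurable G ∧ ∫⁻ ξ, G ξ ≤ volume (cube n ρ) ∧
      ∀ ξ, G ξ ≠ ∞ → mval ρ (Xset n ρ Ψ l ξ) ≤ (ENNReal.ofReal (4 * ρ))⁻¹ + K * G ξ := by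
  induction l using Fin.lastCases with
  | last =>
    refine ⟨0, aemeasurable_zero, by simp only [Pi.zero_apply, lintegral_zero, zero_le],
      fun ξ _ ↦ ?_⟩
    rw [mval, if_pos subsingleton_Xset_last]
    exact le_self_add
  | cast k =>
    have hΨx : ∀ x ∈ cube n ρ, DifferentiableAt ℝ Ψ x := fun x hx ↦
      hΨ.differentiableAt (isOpen_cube.mem_nhds hx)
    have hderiv : ∀ x ∈ cube n ρ, HasFDerivWithinAt (projGraph k.castSucc Ψ)
        (fderiv ℝ (projGraph k.castSucc Ψ) x) (cube n ρ) x := fun x hx ↦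
      have hdiff := (hasFDerivAt_projGraph k.castSucc (hΨx x hx).hasFDerivAt).differentiableAt
      hdiff.hasFDerivAt.hasFDerivWithinAt
    have hmeas := measurable_fderiv ℝ (projGraph k.castSucc Ψ)
    exact ⟨_, aemeasurable_fiberSum isOpen_cube.measurableSet hmeas hderiv
      (measurable_abs_det_inv hmeas),
      lintegral_fiberSum_abs_det_inv_le isOpen_cube.measurableSet hmeas hderiv,
      fun ξ ↦ mval_Xset_castSucc_le k hΨ hK fun x hx ↦
        (ofReal_abs_det_fderiv_projGraph k (hΨx x hx)).le⟩

lemma lintegral_mval_Xset_le (hρ : 0 < ρ) (hΨ : DifferentiableOn ℝ Ψ (cube n ρ))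
    (hK : LipschitzOnWith K (fderiv ℝ Ψ) (cube n ρ)) (l : Fin (n + 1)) :
    ∫⁻ ξ in cube n ρ, mval ρ (Xset n ρ Ψ l ξ) ≤
        ((ENNReal.ofReal (4 * ρ))⁻¹ + K) * volume (cube n ρ) ∧
      ∀ᵐ ξ ∂volume.restrict (cube n ρ), mval ρ (Xset n ρ Ψ l ξ) < ⊤ := by
  obtain ⟨G, hGm, hG, hmval⟩ := exists_mval_Xset_le hΨ hK l
  have hvol : volume (cube n ρ) ≠ ∞ := by
    rw [volume_cube]
    exact ENNReal.pow_ne_top ENNReal.ofReal_ne_top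
  have hG_fin : ∀ᵐ ξ ∂volume.restrict (cube n ρ), G ξ < ∞ :=
    ae_restrict_of_ae (ae_lt_top' hGm (ne_top_of_le_ne_top hvol hG))
  constructor
  · calc ∫⁻ ξ in cube n ρ, mval ρ (Xset n ρ Ψ l ξ)
        ≤ ∫⁻ ξ in cube n ρ, ((ENNReal.ofReal (4 * ρ))⁻¹ + K * G ξ) :=
          lintegral_mono_ae (hG_fin.mono fun ξ hξ ↦ hmval ξ hξ.ne)
      _ = (ENNReal.ofReal (4 * ρ))⁻¹ * volume (cube n ρ) + K * ∫⁻ ξ in cube n ρ, G ξ := by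
          rw [lintegral_add_left measurable_const, setLIntegral_const,
            lintegral_const_mul' _ _ ENNReal.coe_ne_top]
      _ ≤ (ENNReal.ofReal (4 * ρ))⁻¹ * volume (cube n ρ) + K * volume (cube n ρ) := by
          gcongr
          exact (setLIntegral_le_lintegral _ _).trans hG
      _ = ((ENNReal.ofReal (4 * ρ))⁻¹ + K) * volume (cube n ρ) := (add_mul _ _ _).symm
  · filter_upwards [hG_fin] with ξ hξ
    have h4ρ : (ENNReal.ofReal (4 * ρ))⁻¹ < ∞ :=
      ENNReal.inv_lt_top.2 (ENNReal.ofReal_pos.2 (by positivity))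
    exact (hmval ξ hξ.ne).trans_lt
      (ENNReal.add_lt_top.2 ⟨h4ρ, ENNReal.mul_lt_top ENNReal.coe_lt_top hξ⟩)

lemma inv_add_mul_volume_cube_le (hn : 1 ≤ n) (hρ : 0 < ρ) (K : ℝ≥0) :
    ((ENNReal.ofReal (4 * ρ))⁻¹ + K) * volume (cube n ρ) ≤
      ENNReal.ofReal (4 ^ n * ρ ^ (n - 1) * (1 + ρ * K)) := by
  obtain ⟨m, rfl⟩ := Nat.exists_eq_add_of_le' hn
  have h4ρ : 0 < 4 * ρ := by positivity
  rw [volume_cube, ← ENNReal.ofReal_inv_of_pos h4ρ, ← ENNReal.ofReal_coe_nnreal,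
    ← ENNReal.ofReal_add (by positivity) K.coe_nonneg, ← ENNReal.ofReal_pow h4ρ.le,
    ← ENNReal.ofReal_mul (by positivity), Nat.add_sub_cancel]
  refine ENNReal.ofReal_le_ofReal ?_
  calc ((4 * ρ)⁻¹ + K) * (4 * ρ) ^ (m + 1)
      = 4 ^ m * ρ ^ m * (1 + 4 * (ρ * K)) := by
        field_simp
        ring
    _ ≤ 4 ^ m * ρ ^ m * (4 * (1 + ρ * K)) := by
        gcongr
        linarith
    _ = 4 ^ (m + 1) * ρ ^ m * (1 + ρ * K) := by ring

end Integration

theorem mval_integral_bound_general {n : ℕ} (hn : 1 ≤ n) {ρ : ℝ} (hρ : 0 < ρ)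
    {Ψ : (Fin n → ℝ) → ℝ} (hΨ : DifferentiableOn ℝ Ψ (cube n ρ)) {K : ℝ≥0}
    (hK : LipschitzOnWith K (fderiv ℝ Ψ) (cube n ρ)) (l : Fin (n + 1)) :
    (∫⁻ ξ in cube n ρ, mval ρ (Xset n ρ Ψ l ξ))
        ≤ ENNReal.ofReal (4 ^ n * ρ ^ (n - 1) * (1 + ρ * K)) ∧
      (∀ᵐ ξ ∂(volume.restrict (cube n ρ)), mval ρ (Xset n ρ Ψ l ξ) < ⊤) := by
  have h := lintegral_mval_Xset_le hρ hΨ hK l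
  exact ⟨h.1.trans (inv_add_mul_volume_cube_le hn hρ K), h.2⟩

/-- For `d = n + 1 ≥ 2` there is a constant `C = C(d)` such that, for every `ρ > 0`,
every `C²` function `Ψ` on the closure of the cube `(−2ρ,2ρ)^{d−1}` with values in
`(−2ρ,2ρ)` and `‖∇²Ψ‖_{L^∞} ≤ M`, and every `l`,
`∫_{(−2ρ,2ρ)^{d−1}} m(ξ°) dξ° ≤ C ρ^{d−2} (1 + ρ M)`; in particular `m(ξ°) < ∞` (hence
`X_l(ξ°)` is finite) for a.e. `ξ°`. -/
theorem mval_integral_bound (n : ℕ) (hn : 1 ≤ n) :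
    ∃ C : ℝ, ∀ ρ : ℝ, 0 < ρ → ∀ Ψ : (Fin n → ℝ) → ℝ,
      ContDiffOn ℝ 2 Ψ (closure (cube n ρ)) →
      (∀ x ∈ closure (cube n ρ), Ψ x ∈ Set.Ioo (-(2 * ρ)) (2 * ρ)) →
      ∀ M : ℝ,
      (∀ x ∈ closure (cube n ρ),
        ‖iteratedFDerivWithin ℝ 2 Ψ (closure (cube n ρ)) x‖ ≤ M) →
      ∀ l : Fin (n + 1),
        (∫⁻ ξ in cube n ρ, mval ρ (Xset n ρ Ψ l ξ))
            ≤ ENNReal.ofReal (C * ρ ^ (n - 1) * (1 + ρ * M)) ∧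
        (∀ᵐ ξ ∂(volume.restrict (cube n ρ)), mval ρ (Xset n ρ Ψ l ξ) < ⊤) := by
  refine ⟨4 ^ n, fun ρ hρ Ψ hΨ _ M hM l ↦ ?_⟩
  lift M to ℝ≥0 using (norm_nonneg _).trans (hM 0 (subset_closure (zero_mem_cube hρ)))
  have hK : LipschitzOnWith M (fderiv ℝ Ψ) (cube n ρ) :=
    lipschitzOnWith_fderiv_of_norm_iteratedFDerivWithin_closure_le isOpen_cube convex_cube hΨ
      fun x hx ↦ hM x (subset_closure hx)
  exact mval_integral_bound_general hn hρ
    ((hΨ.differentiableOn two_ne_zero).mono subset_closure) hK l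
end

section
/- Let d₁ > 0. There is a constant C, depending only on d₁, with the following property. Let J_k = (s_k, t_k), k = 1,…,N, be finitely many open intervals in ℝ whose closures are pairwise disjoint and which satisfy |J_k| ≤ d₁ for all k, and let J = ∪_k J_k. Then for every T ∈ (0,1], Σ_{k=1}^{N} ∫_{t ∉ J} ∫_{s ∈ J_k, |t−s| ≥ T} |t−s|^{−2} ds dt ≤ C · N · log(1/T + 1). -/
open MeasureTheory

/-!
Where `|x - y| ≥ T` the kernel `|x - y|⁻²` is at most four times the regularized kernel
`(|x - y| + T)⁻²`, whose integral over the whole of `Jᶜ × J` can be computed exactly for an interval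
`J = (a, b)`: by Tonelli, integrating `x` over the two half-lines outside `J` leaves
`(y - a + T)⁻¹ + (b - y + T)⁻¹`, and integrating `y` over `J` gives `2 log ((b - a) / T + 1)`.
Removing the other intervals from the domain of `x` only decreases the integral, and Bernoulli's
inequality compares the logarithm with `log (1 / T + 1)`.
-/

open Set Real Filter Topology

lemma inv_sq_le_four_mul_inv_add_sq {K : Type*} [Field K] [LinearOrder K] [IsStrictOrderedRing K]
    {r T : K} (hT : 0 < T) (hr : T ≤ r) : (r ^ 2)⁻¹ ≤ 4 * ((r + T) ^ 2)⁻¹ := by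
  have hr0 : 0 < r := hT.trans_le hr
  calc (r ^ 2)⁻¹ = 4 * ((r + r) ^ 2)⁻¹ := by field
    _ ≤ 4 * ((r + T) ^ 2)⁻¹ := by gcongr

lemma log_one_add_mul_le_mul_log_one_add {p x : ℝ} (hp : 1 ≤ p) (hpx : 0 < 1 + p * x) :
    log (1 + p * x) ≤ p * log (1 + x) := by
  have hx : -1 < x := by
    by_contra! h
    nlinarith
  rw [← log_rpow (by linarith)]
  exact log_le_log hpx (one_add_mul_self_le_rpow_one_add hx.le hp)

lemma setLIntegral_preimage_add_right {G : Type*} [AddGroup G] [MeasurableSpace G]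
    [MeasurableAdd G] {μ : Measure G} [μ.IsAddRightInvariant] (f : G → ENNReal)
    (S : Set G) (c : G) :
    ∫⁻ x in (· + c) ⁻¹' S, f (x + c) ∂μ = ∫⁻ x in S, f x ∂μ :=
  (measurePreserving_add_right μ c).setLIntegral_comp_preimage_emb
    (measurableEmbedding_addRight c) f S

lemma setLIntegral_neg_comp_neg {G : Type*} [InvolutiveNeg G] [MeasurableSpace G]
    [MeasurableNeg G] {μ : Measure G} [μ.IsNegInvariant] (f : G → ENNReal) (S : Set G) :
    ∫⁻ x in -S, f (-x) ∂μ = ∫⁻ x in S, f x ∂μ :=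
  (Measure.measurePreserving_neg μ).setLIntegral_comp_preimage_emb
    (MeasurableEquiv.neg G).measurableEmbedding f S

lemma lintegral_Ici_inv_sq {a : ℝ} (ha : 0 < a) :
    ∫⁻ u in Ici a, ENNReal.ofReal (u ^ 2)⁻¹ = ENNReal.ofReal a⁻¹ := by
  have hderiv : ∀ u ∈ Ici a, HasDerivAt (fun u ↦ -u⁻¹) (u ^ 2)⁻¹ u := fun u hu ↦ by
    simpa only [neg_neg] using (hasDerivAt_inv (ha.trans_le hu).ne').fun_neg
  have hnonneg : ∀ u ∈ Ioi a, 0 ≤ (u ^ 2)⁻¹ := fun u _ ↦ by positivity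
  have hlim : Tendsto (fun u : ℝ ↦ -u⁻¹) atTop (𝓝 0) := by
    simpa using (tendsto_inv_atTop_zero (𝕜 := ℝ)).neg
  rw [setLIntegral_congr Ioi_ae_eq_Ici.symm, ← ofReal_integral_eq_lintegral_ofReal
      (integrableOn_Ioi_deriv_of_nonneg' hderiv hnonneg hlim)
      (ae_restrict_of_forall_mem measurableSet_Ioi hnonneg),
    integral_Ioi_of_hasDerivAt_of_nonneg' hderiv hnonneg hlim, zero_sub, neg_neg]

lemma lintegral_Ioo_inv {a b : ℝ} (ha : 0 < a) (hab : a ≤ b) :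
    ∫⁻ u in Ioo a b, ENNReal.ofReal u⁻¹ = ENNReal.ofReal (log (b / a)) := by
  have hint : IntervalIntegrable (fun u : ℝ ↦ u⁻¹) volume a b :=
    intervalIntegral.intervalIntegrable_inv
      (fun u hu h ↦ notMem_uIcc_of_lt ha (ha.trans_le hab) (h ▸ hu)) continuousOn_id
  rw [setLIntegral_congr Ioo_ae_eq_Ioc, ← ofReal_integral_eq_lintegral_ofReal
      ((intervalIntegrable_iff_integrableOn_Ioc_of_le hab).1 hint)
      (ae_restrict_of_forall_mem measurableSet_Ioc fun u hu ↦ inv_nonneg.2 (ha.trans hu.1).le),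
    ← intervalIntegral.integral_of_le hab, integral_inv_of_pos ha (ha.trans_le hab)]

section RegularizedKernel

variable {a b y T : ℝ}

lemma lintegral_Ici_inv_abs_sub_add_sq (hy : y ≤ b) (hT : 0 < T) :
    ∫⁻ x in Ici b, ENNReal.ofReal ((|x - y| + T) ^ 2)⁻¹ = ENNReal.ofReal (b - y + T)⁻¹ := by
  rw [← lintegral_Ici_inv_sq (by linarith : 0 < b - y + T),
    ← setLIntegral_preimage_add_right _ (Ici b) (y - T), preimage_add_const_Ici, ← sub_add]
  refine setLIntegral_congr_fun measurableSet_Ici fun u (hu : b - y + T ≤ u) ↦ ?_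
  have habs : |u + (y - T) - y| + T = u := by
    rw [abs_of_nonneg (by linarith)]
    ring
  simp only [habs]

lemma lintegral_Iic_inv_abs_sub_add_sq (hy : a ≤ y) (hT : 0 < T) :
    ∫⁻ x in Iic a, ENNReal.ofReal ((|x - y| + T) ^ 2)⁻¹ = ENNReal.ofReal (y - a + T)⁻¹ := by
  rw [← neg_sub_neg, ← lintegral_Ici_inv_abs_sub_add_sq (neg_le_neg hy) hT,
    ← setLIntegral_neg_comp_neg _ (Iic a), neg_Iic]
  simp only [neg_sub_left, abs_neg, sub_neg_eq_add, add_comm y]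

lemma lintegral_compl_Ioo_inv_abs_sub_add_sq (hy : y ∈ Ioo a b) (hT : 0 < T) :
    ∫⁻ x in (Ioo a b)ᶜ, ENNReal.ofReal ((|x - y| + T) ^ 2)⁻¹
      = ENNReal.ofReal (y - a + T)⁻¹ + ENNReal.ofReal (b - y + T)⁻¹ := by
  have hdisj : Disjoint (Iic a) (Ici b) := Iic_disjoint_Ici.2 (hy.1.trans hy.2).not_ge
  rw [← Ioi_inter_Iio, compl_inter, compl_Ioi, compl_Iio, lintegral_union measurableSet_Ici hdisj,
    lintegral_Iic_inv_abs_sub_add_sq hy.1.le hT, lintegral_Ici_inv_abs_sub_add_sq hy.2.le hT]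

lemma lintegral_Ioo_inv_sub_left_add (hab : a ≤ b) (hT : 0 < T) :
    ∫⁻ y in Ioo a b, ENNReal.ofReal (y - a + T)⁻¹ = ENNReal.ofReal (log ((b - a) / T + 1)) := by
  rw [div_add_one hT.ne', ← lintegral_Ioo_inv hT (by linarith : T ≤ b - a + T),
    ← setLIntegral_preimage_add_right _ (Ioo a b) (a - T), preimage_add_const_Ioo, sub_sub_cancel,
    ← sub_add]
  refine setLIntegral_congr_fun measurableSet_Ioo fun u _ ↦ ?_
  ring_nf

lemma lintegral_Ioo_inv_sub_right_add (hab : a ≤ b) (hT : 0 < T) :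
    ∫⁻ y in Ioo a b, ENNReal.ofReal (b - y + T)⁻¹ = ENNReal.ofReal (log ((b - a) / T + 1)) := by
  rw [← neg_sub_neg a b, ← lintegral_Ioo_inv_sub_left_add (neg_le_neg hab) hT,
    ← setLIntegral_neg_comp_neg _ (Ioo a b), neg_Ioo]
  simp only [sub_neg_eq_add, add_comm b]

lemma lintegral_compl_Ioo_lintegral_Ioo_inv_abs_sub_add_sq (hab : a ≤ b) (hT : 0 < T) :
    ∫⁻ x in (Ioo a b)ᶜ, ∫⁻ y in Ioo a b, ENNReal.ofReal ((|x - y| + T) ^ 2)⁻¹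
      = 2 * ENNReal.ofReal (log ((b - a) / T + 1)) := by
  calc ∫⁻ x in (Ioo a b)ᶜ, ∫⁻ y in Ioo a b, ENNReal.ofReal ((|x - y| + T) ^ 2)⁻¹
    _ = ∫⁻ y in Ioo a b, ∫⁻ x in (Ioo a b)ᶜ, ENNReal.ofReal ((|x - y| + T) ^ 2)⁻¹ :=
      lintegral_lintegral_swap (by fun_prop)
    _ = ∫⁻ y in Ioo a b, (ENNReal.ofReal (y - a + T)⁻¹ + ENNReal.ofReal (b - y + T)⁻¹) :=
      setLIntegral_congr_fun measurableSet_Ioo fun y hy ↦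
        lintegral_compl_Ioo_inv_abs_sub_add_sq hy hT
    _ = 2 * ENNReal.ofReal (log ((b - a) / T + 1)) := by
      rw [lintegral_add_left (f := fun y ↦ ENNReal.ofReal (y - a + T)⁻¹) (by fun_prop),
        lintegral_Ioo_inv_sub_left_add hab hT, lintegral_Ioo_inv_sub_right_add hab hT, two_mul]

end RegularizedKernel

lemma setLIntegral_inv_abs_sub_sq_le {μ : Measure ℝ} {T : ℝ} (hT : 0 < T) (S : Set ℝ) (x : ℝ) :
    ∫⁻ y in {y | y ∈ S ∧ T ≤ |x - y|}, ENNReal.ofReal (|x - y| ^ 2)⁻¹ ∂μ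
      ≤ 4 * ∫⁻ y in S, ENNReal.ofReal ((|x - y| + T) ^ 2)⁻¹ ∂μ := by
  rw [← lintegral_const_mul' _ _ (by finiteness)]
  refine (setLIntegral_mono (by fun_prop) fun y hy ↦ ?_).trans (lintegral_mono_set fun y hy ↦ hy.1)
  rw [← ENNReal.ofReal_ofNat 4, ← ENNReal.ofReal_mul zero_le_four]
  exact ENNReal.ofReal_le_ofReal (inv_sq_le_four_mul_inv_add_sq hT hy.2)

lemma lintegral_lintegral_Ioo_inv_abs_sub_sq_le {a b T : ℝ} {S : Set ℝ} (hab : a ≤ b)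
    (hT : 0 < T) (hS : S ⊆ (Ioo a b)ᶜ) :
    ∫⁻ x in S, ∫⁻ y in {y | y ∈ Ioo a b ∧ T ≤ |x - y|}, ENNReal.ofReal (|x - y| ^ 2)⁻¹
      ≤ ENNReal.ofReal (8 * log ((b - a) / T + 1)) := by
  calc ∫⁻ x in S, ∫⁻ y in {y | y ∈ Ioo a b ∧ T ≤ |x - y|}, ENNReal.ofReal (|x - y| ^ 2)⁻¹
    _ ≤ ∫⁻ x in (Ioo a b)ᶜ, 4 * ∫⁻ y in Ioo a b, ENNReal.ofReal ((|x - y| + T) ^ 2)⁻¹ :=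
      lintegral_mono' (Measure.restrict_mono hS le_rfl)
        (setLIntegral_inv_abs_sub_sq_le hT _)
    _ = 4 * (2 * ENNReal.ofReal (log ((b - a) / T + 1))) := by
      rw [lintegral_const_mul' _ _ (by finiteness),
        lintegral_compl_Ioo_lintegral_Ioo_inv_abs_sub_add_sq hab hT]
    _ = ENNReal.ofReal (8 * log ((b - a) / T + 1)) := by
      rw [← mul_assoc, ENNReal.ofReal_mul (by norm_num), ENNReal.ofReal_ofNat]
      norm_num

lemma log_div_add_one_le {d L T : ℝ} (hL : 0 ≤ L) (hLd : L ≤ d) (hT : 0 < T) :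
    log (L / T + 1) ≤ (1 + d) * log (1 / T + 1) := by
  have hle : L / T + 1 ≤ 1 + (1 + d) * (1 / T) := by
    rw [mul_one_div, add_comm]
    gcongr
    linarith
  calc log (L / T + 1) ≤ log (1 + (1 + d) * (1 / T)) := log_le_log (by positivity) hle
    _ ≤ (1 + d) * log (1 + 1 / T) :=
      log_one_add_mul_le_mul_log_one_add (by linarith) (hle.trans_lt' (by positivity))
    _ = (1 + d) * log (1 / T + 1) := by rw [add_comm 1 (1 / T)]

theorem intervals_log_integral_bound_general {ι : Type*} [Fintype ι] {d T : ℝ} {s t : ι → ℝ}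
    (hst : ∀ k, s k ≤ t k) (hd : ∀ k, t k - s k ≤ d) (hT : 0 < T) :
    ∑ k, ∫⁻ x in (⋃ j, Ioo (s j) (t j))ᶜ, ∫⁻ y in {y | y ∈ Ioo (s k) (t k) ∧ T ≤ |x - y|},
        ENNReal.ofReal (|x - y| ^ 2)⁻¹
      ≤ ENNReal.ofReal (8 * (1 + d) * Fintype.card ι * log (1 / T + 1)) := by
  calc _ ≤ ∑ _k : ι, ENNReal.ofReal (8 * ((1 + d) * log (1 / T + 1))) := by
        refine Finset.sum_le_sum fun k _ ↦ (lintegral_lintegral_Ioo_inv_abs_sub_sq_le (hst k) hT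
          (compl_subset_compl.2 (subset_iUnion_of_subset k subset_rfl))).trans ?_
        gcongr
        exact log_div_add_one_le (sub_nonneg.2 (hst k)) (hd k) hT
    _ = ENNReal.ofReal (8 * (1 + d) * Fintype.card ι * log (1 / T + 1)) := by
        rw [Finset.sum_const, Finset.card_univ, ← ENNReal.ofReal_nsmul, nsmul_eq_mul]
        ring_nf

/-- There is a constant `C = C(d₁)` such that for any finite collection of open intervals
`J_k = (s_k, t_k)` with pairwise disjoint closures and lengths `≤ d₁`, with
`J = ∪_k J_k`, and every `T ∈ (0,1]`:
`Σ_k ∫_{t ∉ J} ∫_{s ∈ J_k, |t−s| ≥ T} |t−s|⁻² ds dt ≤ C N log(1/T + 1)`. -/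
theorem intervals_log_integral_bound (d₁ : ℝ) (hd₁ : 0 < d₁) :
    ∃ C : ℝ, ∀ (N : ℕ) (s t : Fin N → ℝ),
      (∀ k, s k < t k) →
      (∀ k, t k - s k ≤ d₁) →
      (∀ k j, k ≠ j → Disjoint (Set.Icc (s k) (t k)) (Set.Icc (s j) (t j))) →
      ∀ T : ℝ, 0 < T → T ≤ 1 →
        ∑ k : Fin N,
          ∫⁻ x in (⋃ j, Set.Ioo (s j) (t j))ᶜ,
            ∫⁻ y in {y : ℝ | y ∈ Set.Ioo (s k) (t k) ∧ T ≤ |x - y|},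
              ENNReal.ofReal ((|x - y| ^ 2)⁻¹)
          ≤ ENNReal.ofReal (C * N * Real.log (1 / T + 1)) :=
  ⟨8 * (1 + d₁), fun N s t hst hd _ T hT _ ↦ by
    simpa only [Fintype.card_fin] using
      intervals_log_integral_bound_general (fun k ↦ (hst k).le) hd hT⟩
end

section
/- Let d ≥ 2 and let Ω ⊂ ℝ^d be a bounded open set with the following Lipschitz-graph structure: there are finitely many bounded open sets D₁,…,D_J and an open set D̃ with ℝ^d = D₁ ∪ … ∪ D_J ∪ D̃, constants 0 < c ≤ C₀, and for each j an orthonormal coordinate system ξ = (ξ̂, ξ_d) and a Lipschitz function Ψ_j : ℝ^{d−1} → ℝ such that c·|ξ_d − Ψ_j(ξ̂)| ≤ ρ(ξ) ≤ C₀·|ξ_d − Ψ_j(ξ̂)| for all ξ ∈ D_j, and c·⟨ξ⟩ ≤ ρ(ξ) for all ξ ∈ D̃, where ρ(ξ) = dist(ξ, ∂Ω) and ⟨ξ⟩ = √(1+|ξ|²). Let β > d and K > 0, and let a_T (0 < T ≤ 1) be smooth functions on ℝ^d satisfying |a_T(ξ) − χ_Ω(ξ)| ≤ K·⟨ρ(ξ)/T⟩^{−β}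 and, for a fixed integer m ≥ 1, |∇^m a_T(ξ)| ≤ K·(T + min{ρ(ξ),1})^{−m}·⟨ρ(ξ)/T⟩^{−β} for all ξ. Then there is a constant C′, independent of T, such that for all T ∈ (0,1]: (i) for every δ > d/β, ∫_{ℝ^d} |a_T(ξ) − χ_Ω(ξ)|^δ dξ ≤ C′·T (with C′ also depending on δ); and (ii) ∫_{ℝ^d} |∇^m a_T(ξ)| dξ ≤ C′·T^{1−m}. -/
open MeasureTheory

/-!
Both integrands are dominated by powers of `⟨ρ/T⟩`, so everything reduces to
`∫ ⟨ρ/T⟩^(-p) ≤ C T` for `p > d`. On a patch `D j`, the distance `ρ` is at least a multiple of the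
height above a graph; by Fubini and the substitution `y ↦ T y` in the graph direction, the patch
contributes `T` times the area of its bounded base. On the unbounded patch, `ρ ≥ c⟨ξ⟩` bounds the
integrand by `c^(-p) T^p ⟨ξ⟩^(-p)`, which is integrable as `p > d`, and `T^p ≤ T`.
The derivative bound follows from `(T + min(ρ,1))^(-m) ≤ T^(-m)`.
-/

open scoped ENNReal NNReal

/-- The Japanese bracket `⟨t⟩ = √(1 + t²)` of a real number; the bracket of a vector `ξ` is
`japaneseBracket ‖ξ‖`. -/
noncomputable def japaneseBracket (t : ℝ) : ℝ := √(1 + t ^ 2)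

lemma japaneseBracket_pos (t : ℝ) : 0 < japaneseBracket t :=
  Real.sqrt_pos.2 (by positivity)

lemma japaneseBracket_abs (t : ℝ) : japaneseBracket |t| = japaneseBracket t := by
  simp only [japaneseBracket, sq_abs]

lemma le_japaneseBracket (t : ℝ) : t ≤ japaneseBracket t :=
  Real.le_sqrt_of_sq_le (by linarith)

lemma japaneseBracket_le_japaneseBracket {s t : ℝ} (h : |s| ≤ |t|) :
    japaneseBracket s ≤ japaneseBracket t :=
  Real.sqrt_le_sqrt (add_le_add_right (sq_le_sq.2 h) 1)

@[fun_prop]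
lemma continuous_japaneseBracket : Continuous japaneseBracket := by
  unfold japaneseBracket
  fun_prop

lemma japaneseBracket_rpow_neg (t p : ℝ) :
    japaneseBracket t ^ (-p) = (1 + t ^ 2) ^ (-p / 2) := by
  rw [japaneseBracket, Real.sqrt_eq_rpow, ← Real.rpow_mul (by positivity)]
  congr 1
  ring

lemma lintegral_japaneseBracket_norm_rpow_ne_top {E : Type*} [NormedAddCommGroup E]
    [NormedSpace ℝ E] [FiniteDimensional ℝ E] [MeasurableSpace E] [BorelSpace E]
    (μ : Measure E) [μ.IsAddHaarMeasure] {p : ℝ} (hp : (Module.finrank ℝ E : ℝ) < p) :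
    ∫⁻ x, ENNReal.ofReal (japaneseBracket ‖x‖ ^ (-p)) ∂μ ≠ ∞ := by
  simp only [japaneseBracket_rpow_neg]
  exact (integrable_rpow_neg_one_add_norm_sq hp).lintegral_lt_top.ne

lemma lintegral_japaneseBracket_rpow_ne_top {p : ℝ} (hp : 1 < p) :
    ∫⁻ y : ℝ, ENNReal.ofReal (japaneseBracket y ^ (-p)) ≠ ∞ := by
  simpa only [Real.norm_eq_abs, japaneseBracket_abs] using
    lintegral_japaneseBracket_norm_rpow_ne_top (volume : Measure ℝ) (p := p) (by simpa using hp)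

lemma lintegral_comp_sub_div (F : ℝ → ℝ≥0∞) (b : ℝ) {s : ℝ} (hs : 0 < s) :
    ∫⁻ y, F ((y - b) / s) = ENNReal.ofReal s * ∫⁻ y, F y := by
  rw [lintegral_sub_right_eq_self (fun y => F (y / s)) b]
  conv_lhs => rw [← Real.smul_map_volume_mul_right hs.ne']
  rw [lintegral_smul_measure, abs_of_pos hs, smul_eq_mul]
  congr 1
  exact (lintegral_map_equiv (fun y => F (y / s)) (MeasurableEquiv.mulRight₀ s hs.ne')).trans
    (lintegral_congr fun y => congrArg F (mul_div_cancel_right₀ y hs.ne'))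

lemma setLIntegral_comp_sub_graph_div {X : Type*} [MeasurableSpace X] {ν : Measure X} [SFinite ν]
    {F : ℝ → ℝ≥0∞} (hF : Measurable F) {Ψ : X → ℝ} (hΨ : Measurable Ψ) (A : Set X)
    {s : ℝ} (hs : 0 < s) :
    ∫⁻ q in A ×ˢ Set.univ, F ((q.2 - Ψ q.1) / s) ∂ν.prod volume
      = ν A * (ENNReal.ofReal s * ∫⁻ y, F y) := by
  rw [setLIntegral_prod _ (by fun_prop)]
  simp only [Measure.restrict_univ, lintegral_comp_sub_div F _ hs, setLIntegral_const, mul_comm]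

/-- The estimate `∫_S ⟨ρ/T⟩^(-p) ≤ C T`, uniformly in `0 < T ≤ 1`: with respect to the decaying
weight `⟨ρ/T⟩^(-p)`, the part of `S` near `{ρ = 0}` looks like a layer of thickness `T`. -/
def HasLayerBound {E : Type*} [MeasurableSpace E] (μ : Measure E) (ρ : E → ℝ) (p : ℝ)
    (S : Set E) : Prop :=
  ∃ C : ℝ≥0, ∀ T : ℝ, 0 < T → T ≤ 1 →
    ∫⁻ ξ in S, ENNReal.ofReal (japaneseBracket (ρ ξ / T) ^ (-p)) ∂μ ≤ C * ENNReal.ofReal T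

namespace HasLayerBound

variable {E : Type*} [MeasurableSpace E] {μ : Measure E} {ρ : E → ℝ} {p : ℝ} {S S' : Set E}

lemma union (h : HasLayerBound μ ρ p S) (h' : HasLayerBound μ ρ p S') :
    HasLayerBound μ ρ p (S ∪ S') := by
  obtain ⟨C, hC⟩ := h
  obtain ⟨C', hC'⟩ := h'
  refine ⟨C + C', fun T hT hT1 => (lintegral_union_le _ _ _).trans ?_⟩
  rw [ENNReal.coe_add, add_mul]
  exact add_le_add (hC T hT hT1) (hC' T hT hT1)

lemma iUnion {ι : Type*} [Finite ι] {S : ι → Set E} (h : ∀ j, HasLayerBound μ ρ p (S j)) :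
    HasLayerBound μ ρ p (⋃ j, S j) := by
  cases nonempty_fintype ι
  choose C hC using h
  refine ⟨∑ j, C j, fun T hT hT1 => (lintegral_iUnion_le _ _).trans ?_⟩
  rw [tsum_fintype, ENNReal.ofNNReal_finsetSum, Finset.sum_mul]
  exact Finset.sum_le_sum fun j _ => hC j T hT hT1

lemma of_le {h : E → ℝ} (hp : 1 ≤ p) (hmeas : Measurable h) (hpos : ∀ ξ ∈ S, 0 < h ξ)
    (hle : ∀ ξ ∈ S, h ξ ≤ ρ ξ) (hfin : ∫⁻ ξ in S, ENNReal.ofReal (h ξ ^ (-p)) ∂μ ≠ ∞) :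
    HasLayerBound μ ρ p S := by
  refine ⟨(∫⁻ ξ in S, ENNReal.ofReal (h ξ ^ (-p)) ∂μ).toNNReal, fun T hT hT1 => ?_⟩
  have hpoint : ∀ ξ ∈ S, japaneseBracket (ρ ξ / T) ^ (-p) ≤ h ξ ^ (-p) * T := fun ξ hξ => by
    have hh := hpos ξ hξ
    calc japaneseBracket (ρ ξ / T) ^ (-p)
        ≤ (h ξ / T) ^ (-p) :=
          Real.rpow_le_rpow_of_nonpos (by positivity)
            ((by gcongr; exact hle ξ hξ : h ξ / T ≤ ρ ξ / T).trans (le_japaneseBracket _))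
            (by linarith)
      _ = h ξ ^ (-p) * T ^ p := by
          rw [Real.div_rpow hh.le hT.le, Real.rpow_neg hT.le, div_inv_eq_mul]
      _ ≤ h ξ ^ (-p) * T := by
          gcongr
          simpa only [Real.rpow_one] using Real.rpow_le_rpow_of_exponent_ge hT hT1 hp
  rw [ENNReal.coe_toNNReal hfin, ← lintegral_mul_const' _ _ ENNReal.ofReal_ne_top]
  refine setLIntegral_mono (by fun_prop) fun ξ hξ => ?_
  rw [← ENNReal.ofReal_mul (Real.rpow_nonneg (hpos ξ hξ).le _)]
  exact ENNReal.ofReal_le_ofReal (hpoint ξ hξ)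

lemma of_graph {X : Type*} [MeasurableSpace X] {ν : Measure X} [SFinite ν] {φ : E → X × ℝ}
    (hφ : MeasurePreserving φ μ (ν.prod volume)) {A : Set X} (hA : MeasurableSet A)
    (hνA : ν A ≠ ∞) (hSA : ∀ ξ ∈ S, (φ ξ).1 ∈ A) {Ψ : X → ℝ} (hΨ : Measurable Ψ) {c : ℝ}
    (hc : 0 < c) (hle : ∀ ξ ∈ S, c * |(φ ξ).2 - Ψ (φ ξ).1| ≤ ρ ξ) (hp : 1 < p) :
    HasLayerBound μ ρ p S := by
  set F : ℝ → ℝ≥0∞ := fun y => ENNReal.ofReal (japaneseBracket y ^ (-p))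
  have hFm : Measurable F := by fun_prop
  have hFfin : ∫⁻ y, F y ≠ ∞ := lintegral_japaneseBracket_rpow_ne_top hp
  refine ⟨(ν A * (ENNReal.ofReal c⁻¹ * ∫⁻ y, F y)).toNNReal, fun T hT _ => ?_⟩
  rw [ENNReal.coe_toNNReal
    (ENNReal.mul_ne_top hνA (ENNReal.mul_ne_top ENNReal.ofReal_ne_top hFfin))]
  have hpoint : ∀ ξ ∈ S, F (ρ ξ / T) ≤ F (((φ ξ).2 - Ψ (φ ξ).1) / (c⁻¹ * T)) := fun ξ hξ => by
    refine ENNReal.ofReal_le_ofReal (Real.rpow_le_rpow_of_nonpos (japaneseBracket_pos _)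
      (japaneseBracket_le_japaneseBracket ?_) (by linarith))
    rw [abs_div, abs_div, abs_of_pos hT, abs_of_pos (by positivity : 0 < c⁻¹ * T), ← div_div,
      div_inv_eq_mul, mul_comm]
    gcongr
    exact (hle ξ hξ).trans (le_abs_self _)
  calc ∫⁻ ξ in S, F (ρ ξ / T) ∂μ
      ≤ ∫⁻ ξ in S, F (((φ ξ).2 - Ψ (φ ξ).1) / (c⁻¹ * T)) ∂μ :=
        setLIntegral_mono (hFm.comp (by have := hφ.measurable; fun_prop)) hpoint
    _ ≤ ∫⁻ ξ in φ ⁻¹' (A ×ˢ Set.univ), F (((φ ξ).2 - Ψ (φ ξ).1) / (c⁻¹ * T)) ∂μ :=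
        lintegral_mono_set fun ξ hξ => ⟨hSA ξ hξ, trivial⟩
    _ = ∫⁻ q in A ×ˢ Set.univ, F ((q.2 - Ψ q.1) / (c⁻¹ * T)) ∂ν.prod volume :=
        hφ.setLIntegral_comp_preimage (f := fun q => F ((q.2 - Ψ q.1) / (c⁻¹ * T)))
          (hA.prod .univ) (by fun_prop)
    _ = ν A * (ENNReal.ofReal c⁻¹ * ∫⁻ y, F y) * ENNReal.ofReal T := by
        rw [setLIntegral_comp_sub_graph_div hFm hΨ A (by positivity),
          ENNReal.ofReal_mul (by positivity)]
        ring

lemma exists_lintegral_le (h : HasLayerBound μ ρ p Set.univ) {u : ℝ → E → ℝ} {A : ℝ → ℝ}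
    (hA : ∀ T, 0 < T → 0 ≤ A T)
    (hu : ∀ T, 0 < T → T ≤ 1 → ∀ ξ, u T ξ ≤ A T * japaneseBracket (ρ ξ / T) ^ (-p)) :
    ∃ C : ℝ, ∀ T, 0 < T → T ≤ 1 →
      ∫⁻ ξ, ENNReal.ofReal (u T ξ) ∂μ ≤ ENNReal.ofReal (C * (A T * T)) := by
  obtain ⟨C, hC⟩ := h
  simp only [Measure.restrict_univ] at hC
  refine ⟨C, fun T hT hT1 => ?_⟩
  calc ∫⁻ ξ, ENNReal.ofReal (u T ξ) ∂μ
      ≤ ∫⁻ ξ, ENNReal.ofReal (A T) * ENNReal.ofReal (japaneseBracket (ρ ξ / T) ^ (-p)) ∂μ :=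
        lintegral_mono fun ξ => by
          rw [← ENNReal.ofReal_mul (hA T hT)]
          exact ENNReal.ofReal_le_ofReal (hu T hT hT1 ξ)
    _ ≤ ENNReal.ofReal (A T) * (C * ENNReal.ofReal T) := by
        rw [lintegral_const_mul' _ _ ENNReal.ofReal_ne_top]
        gcongr
        exact hC T hT hT1
    _ = ENNReal.ofReal (C * (A T * T)) := by
        rw [ENNReal.ofReal_mul C.coe_nonneg, ENNReal.ofReal_mul (hA T hT),
          ENNReal.ofReal_coe_nnreal]
        ring

lemma exists_lintegral_rpow_le {β δ K : ℝ} (h : HasLayerBound μ ρ (β * δ) Set.univ)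
    (hδ : 0 ≤ δ) (hK : 0 ≤ K) {f : ℝ → E → ℝ} (hf₀ : ∀ T ξ, 0 ≤ f T ξ)
    (hf : ∀ T, 0 < T → T ≤ 1 → ∀ ξ, f T ξ ≤ K * japaneseBracket (ρ ξ / T) ^ (-β)) :
    ∃ C : ℝ, ∀ T, 0 < T → T ≤ 1 →
      ∫⁻ ξ, ENNReal.ofReal (f T ξ ^ δ) ∂μ ≤ ENNReal.ofReal (C * T) := by
  obtain ⟨C, hC⟩ := h.exists_lintegral_le (u := fun T ξ => f T ξ ^ δ) (A := fun _ => K ^ δ)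
    (fun _ _ => by positivity) fun T hT hT1 ξ => by
      have hb := (japaneseBracket_pos (ρ ξ / T)).le
      calc f T ξ ^ δ ≤ (K * japaneseBracket (ρ ξ / T) ^ (-β)) ^ δ :=
            Real.rpow_le_rpow (hf₀ T ξ) (hf T hT hT1 ξ) hδ
        _ = K ^ δ * japaneseBracket (ρ ξ / T) ^ (-(β * δ)) := by
            rw [Real.mul_rpow hK (by positivity), ← Real.rpow_mul hb, neg_mul]
  exact ⟨C * K ^ δ, by simpa only [mul_assoc] using hC⟩

lemma exists_lintegral_le_rpow_one_sub {β r K : ℝ} (h : HasLayerBound μ ρ β Set.univ)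
    (hρ : ∀ ξ, 0 ≤ ρ ξ) (hr : 0 ≤ r) (hK : 0 ≤ K) {g : ℝ → E → ℝ}
    (hg : ∀ T, 0 < T → T ≤ 1 → ∀ ξ,
      g T ξ ≤ K * (T + min (ρ ξ) 1) ^ (-r) * japaneseBracket (ρ ξ / T) ^ (-β)) :
    ∃ C : ℝ, ∀ T, 0 < T → T ≤ 1 →
      ∫⁻ ξ, ENNReal.ofReal (g T ξ) ∂μ ≤ ENNReal.ofReal (C * T ^ (1 - r)) := by
  obtain ⟨C, hC⟩ := h.exists_lintegral_le (u := g) (A := fun T => K * T ^ (-r))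
    (fun _ _ => by positivity) fun T hT hT1 ξ => by
      have hb := japaneseBracket_pos (ρ ξ / T)
      have hmin : T ≤ T + min (ρ ξ) 1 := le_add_of_nonneg_right (le_min (hρ ξ) zero_le_one)
      have hpow : (T + min (ρ ξ) 1) ^ (-r) ≤ T ^ (-r) :=
        Real.rpow_le_rpow_of_nonpos hT hmin (neg_nonpos.2 hr)
      exact (hg T hT hT1 ξ).trans (by gcongr)
  refine ⟨C * K, fun T hT hT1 => (hC T hT hT1).trans_eq ?_⟩
  rw [sub_eq_neg_add, Real.rpow_add hT, Real.rpow_one]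
  ring_nf

end HasLayerBound

section Euclidean

variable {n : ℕ}

/-- The splitting `ξ ↦ (ξ̂, ξ_d)` of a vector into its first `d - 1` coordinates and its last
one, for `d = n + 1`. -/
def splitLast (ξ : EuclideanSpace ℝ (Fin (n + 1))) : EuclideanSpace ℝ (Fin n) × ℝ :=
  (WithLp.toLp 2 fun i => ξ i.castSucc, ξ (Fin.last n))

lemma measurePreserving_splitLast :
    MeasurePreserving (splitLast (n := n)) volume (volume.prod volume) := by
  have hsplit := (volume_preserving_piFinSuccAbove (fun _ : Fin (n + 1) => ℝ) (Fin.last n)).comp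
    (PiLp.volume_preserving_ofLp (Fin (n + 1)))
  have hswap := (((PiLp.volume_preserving_toLp (Fin n)).prod
    (MeasurePreserving.id (volume : Measure ℝ))).comp Measure.measurePreserving_swap).comp hsplit
  have hcomp : (Prod.map (WithLp.toLp 2) id ∘ Prod.swap) ∘
      MeasurableEquiv.piFinSuccAbove (fun _ : Fin (n + 1) => ℝ) (Fin.last n) ∘ WithLp.ofLp
        = splitLast :=
    funext fun ξ => Prod.ext (PiLp.ext fun i => congrArg ξ (Fin.succAbove_last_apply i)) rfl
  rw [hcomp] at hswap
  exact hswap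

lemma norm_splitLast_fst_le (ξ : EuclideanSpace ℝ (Fin (n + 1))) : ‖(splitLast ξ).1‖ ≤ ‖ξ‖ := by
  refine le_of_sq_le_sq ?_ (norm_nonneg ξ)
  rw [EuclideanSpace.norm_sq_eq, EuclideanSpace.norm_sq_eq, Fin.sum_univ_castSucc]
  exact le_add_of_nonneg_right (sq_nonneg _)

variable {ρ : EuclideanSpace ℝ (Fin (n + 1)) → ℝ} {c p : ℝ}
  {S : Set (EuclideanSpace ℝ (Fin (n + 1)))}

lemma hasLayerBound_of_isBounded_of_graph (hS : Bornology.IsBounded S)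
    (e : EuclideanSpace ℝ (Fin (n + 1)) ≃ₗᵢ[ℝ] EuclideanSpace ℝ (Fin (n + 1)))
    {Ψ : EuclideanSpace ℝ (Fin n) → ℝ} (hΨ : Measurable Ψ) (hc : 0 < c)
    (hle : ∀ ξ ∈ S, c * |(splitLast (e ξ)).2 - Ψ (splitLast (e ξ)).1| ≤ ρ ξ) (hp : 1 < p) :
    HasLayerBound volume ρ p S := by
  obtain ⟨R, hR⟩ := hS.exists_norm_le
  refine .of_graph (A := Metric.closedBall 0 R)
    (measurePreserving_splitLast.comp e.measurePreserving) measurableSet_closedBall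
    measure_closedBall_lt_top.ne (fun ξ hξ => ?_) hΨ hc hle hp
  rw [mem_closedBall_zero_iff]
  calc ‖(splitLast (e ξ)).1‖ ≤ ‖e ξ‖ := norm_splitLast_fst_le _
    _ = ‖ξ‖ := e.norm_map ξ
    _ ≤ R := hR ξ hξ

end Euclidean

lemma hasLayerBound_of_japaneseBracket_norm_le {E : Type*} [NormedAddCommGroup E]
    [NormedSpace ℝ E] [FiniteDimensional ℝ E] [MeasurableSpace E] [BorelSpace E]
    {μ : Measure E} [μ.IsAddHaarMeasure] {ρ : E → ℝ} {c p : ℝ} {S : Set E} (hc : 0 < c)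
    (hle : ∀ ξ ∈ S, c * japaneseBracket ‖ξ‖ ≤ ρ ξ) (hp : 1 ≤ p)
    (hdim : (Module.finrank ℝ E : ℝ) < p) : HasLayerBound μ ρ p S := by
  have hpos (ξ : E) : 0 < c * japaneseBracket ‖ξ‖ := mul_pos hc (japaneseBracket_pos _)
  refine .of_le hp (by fun_prop) (fun ξ _ => hpos ξ) hle
    (ne_top_of_le_ne_top ?_ (setLIntegral_le_lintegral S _))
  simp_rw [Real.mul_rpow hc.le (japaneseBracket_pos _).le,
    ENNReal.ofReal_mul (Real.rpow_nonneg hc.le _)]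
  rw [lintegral_const_mul' _ _ ENNReal.ofReal_ne_top]
  exact ENNReal.mul_ne_top ENNReal.ofReal_ne_top
    (lintegral_japaneseBracket_norm_rpow_ne_top μ hdim)

theorem symbol_integral_bounds_general {n : ℕ} (Ω : Set (EuclideanSpace ℝ (Fin (n + 1))))
    {ι : Type*} [Finite ι] (D : ι → Set (EuclideanSpace ℝ (Fin (n + 1))))
    (hDb : ∀ j, Bornology.IsBounded (D j)) (Dt : Set (EuclideanSpace ℝ (Fin (n + 1))))
    (hcover : (⋃ j, D j) ∪ Dt = Set.univ) {c : ℝ} (hc : 0 < c)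
    (e : ι → (EuclideanSpace ℝ (Fin (n + 1)) ≃ₗᵢ[ℝ] EuclideanSpace ℝ (Fin (n + 1))))
    (Ψ : ι → EuclideanSpace ℝ (Fin n) → ℝ) (hΨ : ∀ j, Measurable (Ψ j))
    (hgraph : ∀ j, ∀ ξ ∈ D j, c * |(splitLast (e j ξ)).2 - Ψ j (splitLast (e j ξ)).1|
      ≤ Metric.infDist ξ (frontier Ω))
    (hfar : ∀ ξ ∈ Dt, c * japaneseBracket ‖ξ‖ ≤ Metric.infDist ξ (frontier Ω))
    {β K : ℝ} (hβ : ((n + 1 : ℕ) : ℝ) < β) (hK : 0 ≤ K) (m : ℕ)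
    (a : ℝ → EuclideanSpace ℝ (Fin (n + 1)) → ℝ)
    (hsmooth : ∀ T : ℝ, 0 < T → T ≤ 1 → ContDiff ℝ m (a T))
    (hclose : ∀ T : ℝ, 0 < T → T ≤ 1 → ∀ ξ, |a T ξ - Ω.indicator (fun _ => (1 : ℝ)) ξ|
      ≤ K * japaneseBracket (Metric.infDist ξ (frontier Ω) / T) ^ (-β))
    (hderiv : ∀ T : ℝ, 0 < T → T ≤ 1 → ∀ ξ, ‖iteratedFDeriv ℝ m (a T) ξ‖
      ≤ K * (T + min (Metric.infDist ξ (frontier Ω)) 1) ^ (-(m : ℝ)) *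
        japaneseBracket (Metric.infDist ξ (frontier Ω) / T) ^ (-β)) :
    (∀ δ : ℝ, ((n + 1 : ℕ) : ℝ) / β < δ → ∃ C' : ℝ, ∀ T : ℝ, 0 < T → T ≤ 1 →
      ∫⁻ ξ, ENNReal.ofReal (|a T ξ - Ω.indicator (fun _ => (1 : ℝ)) ξ| ^ δ)
        ≤ ENNReal.ofReal (C' * T)) ∧
    (∃ C' : ℝ, ∀ T : ℝ, 0 < T → T ≤ 1 →
      ∫⁻ ξ, ENNReal.ofReal ‖iteratedFDeriv ℝ m (a T) ξ‖
        ≤ ENNReal.ofReal (C' * T ^ (1 - (m : ℝ)))) := by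
  have layer {p : ℝ} (hp : ((n + 1 : ℕ) : ℝ) < p) :
      HasLayerBound volume (fun ξ => Metric.infDist ξ (frontier Ω)) p Set.univ := by
    have hp1 : 1 < p := lt_of_le_of_lt (by simp) hp
    rw [← hcover]
    exact (HasLayerBound.iUnion fun j =>
      hasLayerBound_of_isBounded_of_graph (hDb j) (e j) (hΨ j) hc (hgraph j) hp1).union
        (hasLayerBound_of_japaneseBracket_norm_le hc hfar hp1.le (by simpa using hp))
  have hβ₀ : 0 < β := (Nat.cast_nonneg _).trans_lt hβ
  refine ⟨fun δ hδ => ?_, (layer hβ).exists_lintegral_le_rpow_one_sub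
    (fun _ => Metric.infDist_nonneg) m.cast_nonneg hK hderiv⟩
  have hδ₀ : 0 ≤ δ := (div_nonneg (Nat.cast_nonneg _) hβ₀.le).trans hδ.le
  exact (layer ((div_lt_iff₀' hβ₀).1 hδ)).exists_lintegral_rpow_le hδ₀ hK
    (fun _ _ => abs_nonneg _) hclose

/-- Integral bounds for a family of smooth symbols approximating the indicator of a
bounded Lipschitz region `Ω ⊂ ℝ^d`, `d ≥ 2`. The boundary of `Ω` is described by
Lipschitz graphs in finitely many bounded open sets `D j` (in suitable orthonormal
coordinates given by rotations `e j`), and `ρ(ξ) = dist(ξ,∂Ω) ≳ ⟨ξ⟩` on the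
complementary open set `Dt`. If `β > d`, `K > 0`, and the smooth symbols `a_T`
(`0 < T ≤ 1`) satisfy `|a_T − χ_Ω| ≤ K⟨ρ/T⟩^{−β}` and
`|∇^m a_T| ≤ K (T + min(ρ,1))^{−m} ⟨ρ/T⟩^{−β}`, then (i) for every `δ > d/β`,
`∫ |a_T − χ_Ω|^δ ≤ C' T`, and (ii) `∫ |∇^m a_T| ≤ C' T^{1−m}`, with constants
independent of `T`. -/
theorem symbol_integral_bounds (d : ℕ) (hd : 2 ≤ d)
    (Ω : Set (EuclideanSpace ℝ (Fin d))) (hΩo : IsOpen Ω) (hΩb : Bornology.IsBounded Ω)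
    (J : ℕ) (D : Fin J → Set (EuclideanSpace ℝ (Fin d)))
    (hDo : ∀ j, IsOpen (D j)) (hDb : ∀ j, Bornology.IsBounded (D j))
    (Dt : Set (EuclideanSpace ℝ (Fin d))) (hDto : IsOpen Dt)
    (hcover : (⋃ j, D j) ∪ Dt = Set.univ)
    (c C₀ : ℝ) (hc : 0 < c) (hcC : c ≤ C₀)
    (e : Fin J → (EuclideanSpace ℝ (Fin d) ≃ₗᵢ[ℝ] EuclideanSpace ℝ (Fin d)))
    (Ψ : Fin J → (EuclideanSpace ℝ (Fin (d - 1)) → ℝ))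
    (hΨlip : ∀ j, ∃ L : NNReal, LipschitzWith L (Ψ j))
    (hgraph : ∀ j, ∀ ξ ∈ D j,
      c * |e j ξ ⟨d - 1, by omega⟩ -
            Ψ j (WithLp.toLp 2 (fun i : Fin (d - 1) => e j ξ (Fin.castLE (by omega) i)))|
          ≤ Metric.infDist ξ (frontier Ω) ∧
      Metric.infDist ξ (frontier Ω)
          ≤ C₀ * |e j ξ ⟨d - 1, by omega⟩ -
                Ψ j (WithLp.toLp 2 (fun i : Fin (d - 1) => e j ξ (Fin.castLE (by omega) i)))|)
    (hfar : ∀ ξ ∈ Dt, c * Real.sqrt (1 + ‖ξ‖ ^ 2) ≤ Metric.infDist ξ (frontier Ω))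
    (β K : ℝ) (hβ : (d : ℝ) < β) (hK : 0 < K)
    (m : ℕ) (hm : 1 ≤ m)
    (a : ℝ → EuclideanSpace ℝ (Fin d) → ℝ)
    (hsmooth : ∀ T : ℝ, 0 < T → T ≤ 1 → ContDiff ℝ (⊤ : ℕ∞) (a T))
    (hclose : ∀ T : ℝ, 0 < T → T ≤ 1 → ∀ ξ,
      |a T ξ - Set.indicator Ω (fun _ => (1 : ℝ)) ξ|
        ≤ K * Real.sqrt (1 + (Metric.infDist ξ (frontier Ω) / T) ^ 2) ^ (-β))
    (hderiv : ∀ T : ℝ, 0 < T → T ≤ 1 → ∀ ξ,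
      ‖iteratedFDeriv ℝ m (a T) ξ‖
        ≤ K * (T + min (Metric.infDist ξ (frontier Ω)) 1) ^ (-(m : ℝ)) *
            Real.sqrt (1 + (Metric.infDist ξ (frontier Ω) / T) ^ 2) ^ (-β)) :
    (∀ δ : ℝ, (d : ℝ) / β < δ → ∃ C' : ℝ, ∀ T : ℝ, 0 < T → T ≤ 1 →
      (∫⁻ ξ, ENNReal.ofReal (|a T ξ - Set.indicator Ω (fun _ => (1 : ℝ)) ξ| ^ δ))
        ≤ ENNReal.ofReal (C' * T)) ∧
    (∃ C' : ℝ, ∀ T : ℝ, 0 < T → T ≤ 1 →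
      (∫⁻ ξ, ENNReal.ofReal ‖iteratedFDeriv ℝ m (a T) ξ‖)
        ≤ ENNReal.ofReal (C' * T ^ (1 - (m : ℝ)))) := by
  obtain ⟨n, rfl⟩ := Nat.exists_eq_add_of_le' (one_le_two.trans hd)
  exact symbol_integral_bounds_general Ω D hDb Dt hcover hc e Ψ
    (fun j => (hΨlip j).choose_spec.continuous.measurable) (fun j ξ hξ => (hgraph j ξ hξ).1) hfar
    hβ hK.le m a (fun T hT hT1 => (hsmooth T hT hT1).of_le (mod_cast le_top)) hclose hderiv
end
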